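/- arXiv:2010.10989 — 3 statements merged into one kernel-verified Lean document; each statement's English description precedes it below -/
import Mathlib

section
/- For every k ∈ ℕ there exists ε = ε(k) > 0 such that: if (Z_1, ..., Z_k) is a mean-zero multivariate Gaussian vector with E[Z_j^2] = 1 for all j and |E[Z_i Z_j]| ≤ ε for all i ≠ j, then the probability that all Z_j have the same sign is at most 2^{-k+2}. -/
open MeasureTheory ProbabilityTheory

/-! The law of a Gaussian vector depends continuously, for weak convergence, on its mean and its
covariance matrix, because its characteristic function does. The set of vectors whose coordinates
are all nonnegative or all nonpositive is closed and has standard Gaussian measure at most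
`2 * 2⁻ᵏ`, so by the portmanteau theorem its measure stays below any larger constant, in particular
`2²⁻ᵏ`, once mean and covariance matrix are close to `0` and `1`. -/

section

open Filter Matrix Set WithLp
open scoped ENNReal RealInnerProductSpace Topology

section WeakConvergence

theorem eventually_measure_lt_of_tendsto_of_isClosed {α E : Type*} {l : Filter α}
    [MeasurableSpace E] [TopologicalSpace E] [OpensMeasurableSpace E] [HasOuterApproxClosed E]
    {μ : ProbabilityMeasure E} {μs : α → ProbabilityMeasure E} (hμ : Tendsto μs l (𝓝 μ))
    {F : Set E} (hF : IsClosed F) {c : ℝ≥0∞} (hc : (μ : Measure E) F < c) :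
    ∀ᶠ a in l, (μs a : Measure E) F < c :=
  eventually_lt_of_limsup_lt
    ((ProbabilityMeasure.limsup_measure_closed_le_of_tendsto hμ hF).trans_lt hc)

theorem tendsto_probabilityMeasure_of_tendsto_charFun {α E : Type*} {l : Filter α}
    [l.IsCountablyGenerated] [NormedAddCommGroup E] [InnerProductSpace ℝ E]
    [FiniteDimensional ℝ E] [MeasurableSpace E] [BorelSpace E]
    {μ : ProbabilityMeasure E} {μs : α → ProbabilityMeasure E}
    (h : ∀ t : E, Tendsto (fun a ↦ charFun (μs a) t) l (𝓝 (charFun μ t))) :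
    Tendsto μs l (𝓝 μ) :=
  tendsto_of_seq_tendsto fun _ hu ↦
    ProbabilityMeasure.tendsto_of_tendsto_charFun fun t ↦ (h t).comp hu

end WeakConvergence

section RealGaussian

open scoped NNReal

variable {m : ℝ} {v : ℝ≥0}

theorem gaussianReal_Iic_eq_gaussianReal_Ici :
    gaussianReal m v (Iic m) = gaussianReal m v (Ici m) := by
  have reflection : (gaussianReal m v).map (2 * m - ·) = gaussianReal m v := by
    rw [gaussianReal_map_const_sub, two_mul, add_sub_cancel_right]
  conv_lhs => rw [← reflection, Measure.map_apply (by fun_prop) measurableSet_Iic]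
  congr 1
  ext x
  simp only [mem_preimage, mem_Iic, mem_Ici]
  constructor <;> intro h <;> linarith

theorem gaussianReal_Ici_self (hv : v ≠ 0) : gaussianReal m v (Ici m) = 1 / 2 := by
  have := nullSingletonClass_gaussianReal (μ := m) hv
  rw [ENNReal.eq_div_iff two_ne_zero ENNReal.ofNat_ne_top, two_mul]
  calc gaussianReal m v (Ici m) + gaussianReal m v (Ici m)
    _ = gaussianReal m v (Ici m) + gaussianReal m v (Ici m)ᶜ := by
      rw [compl_Ici, measure_congr Iio_ae_eq_Iic, gaussianReal_Iic_eq_gaussianReal_Ici]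
    _ = 1 := prob_add_prob_compl measurableSet_Ici

theorem gaussianReal_Iic_self (hv : v ≠ 0) : gaussianReal m v (Iic m) = 1 / 2 :=
  gaussianReal_Iic_eq_gaussianReal_Ici.trans (gaussianReal_Ici_self hv)

end RealGaussian

section SameSign

variable (ι : Type*)

/-- The vectors whose coordinates are all nonnegative or all nonpositive. The inequalities are weak
so that the set is closed. -/
def sameSign : Set (EuclideanSpace ℝ ι) :=
  {x | ∀ i, 0 ≤ x i} ∪ {x | ∀ i, x i ≤ 0}

theorem isClosed_sameSign : IsClosed (sameSign ι) := by
  simp only [sameSign, ofPred_forall]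
  exact .union (isClosed_iInter fun i ↦ isClosed_le (by fun_prop) (by fun_prop))
    (isClosed_iInter fun i ↦ isClosed_le (by fun_prop) (by fun_prop))

theorem stdGaussian_sameSign_le [Fintype ι] :
    stdGaussian (EuclideanSpace ℝ ι) (sameSign ι) ≤ 2 * (1 / 2) ^ Fintype.card ι := by
  have preimage_sameSign : toLp 2 ⁻¹' sameSign ι =
      (univ.pi fun _ ↦ Ici (0 : ℝ)) ∪ (univ.pi fun _ ↦ Iic (0 : ℝ)) := by
    ext x
    simp [sameSign, Pi.le_def]
  rw [← map_pi_eq_stdGaussian,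
    Measure.map_apply (by fun_prop) (isClosed_sameSign ι).measurableSet, preimage_sameSign]
  refine (measure_union_le _ _).trans_eq ?_
  simp only [Measure.pi_pi, gaussianReal_Ici_self one_ne_zero, gaussianReal_Iic_self one_ne_zero,
    Finset.prod_const, Finset.card_univ, two_mul]

end SameSign

section CovarianceMatrix

variable {ι Ω : Type*} [MeasurableSpace Ω] {P : Measure Ω} {X : ι → Ω → ℝ}

variable (X P) in
/-- The covariance matrix of the random vector `X`, i.e. the matrix parameter of
`multivariateGaussian` when `X` is Gaussian. -/
noncomputable def covarianceMatrix : Matrix ι ι ℝ :=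
  of fun i j ↦ cov[X i, X j; P]

theorem covarianceBilin_map_toLp [Fintype ι] [IsFiniteMeasure P]
    (hX : ∀ i, MemLp (X i) 2 P) (x y : EuclideanSpace ℝ ι) :
    covarianceBilin (P.map fun ω ↦ toLp 2 (X · ω)) x y = x ⬝ᵥ covarianceMatrix P X *ᵥ y := by
  simp only [covarianceBilin_apply_pi hX, covarianceMatrix, dotProduct, mulVec, Finset.mul_sum,
    of_apply]
  exact Finset.sum_congr rfl fun i _ ↦ Finset.sum_congr rfl fun j _ ↦ by ring

theorem posSemidef_covarianceMatrix [Finite ι] [IsFiniteMeasure P] (hX : ∀ i, MemLp (X i) 2 P) :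
    (covarianceMatrix P X).PosSemidef := by
  have := Fintype.ofFinite ι
  exact .of_dotProduct_mulVec_nonneg (Matrix.ext fun _ _ ↦ covariance_comm _ _) fun x ↦
    (covarianceBilin_self_nonneg (toLp 2 x)).trans_eq (covarianceBilin_map_toLp hX _ _)

theorem covariance_eq_integral_mul {Y Z : Ω → ℝ} (hY : P[Y] = 0) (hZ : P[Z] = 0) :
    cov[Y, Z; P] = ∫ ω, Y ω * Z ω ∂P := by
  simp only [covariance, hY, hZ, sub_zero]

theorem abs_covarianceMatrix_sub_one_le [DecidableEq ι] {ε : ℝ} (hε : 0 ≤ ε)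
    (hmean : ∀ i, P[X i] = 0) (hvar : ∀ i, ∫ ω, X i ω ^ 2 ∂P = 1)
    (hcorr : ∀ i j, i ≠ j → |∫ ω, X i ω * X j ω ∂P| ≤ ε) (i j : ι) :
    |covarianceMatrix P X i j - (1 : Matrix ι ι ℝ) i j| ≤ ε := by
  rw [covarianceMatrix, of_apply, covariance_eq_integral_mul (hmean i) (hmean j)]
  rcases eq_or_ne i j with rfl | hij
  · simpa [← sq, hvar i] using hε
  · simpa [hij] using hcorr i j hij

end CovarianceMatrix

section MultivariateGaussian

variable {ι : Type*} [Fintype ι]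

theorem tendsto_multivariateGaussian [DecidableEq ι] {α : Type*} {l : Filter α}
    [l.IsCountablyGenerated] {m : α → EuclideanSpace ℝ ι} {m₀ : EuclideanSpace ℝ ι}
    {S : α → Matrix ι ι ℝ} {S₀ : Matrix ι ι ℝ}
    (hm : Tendsto m l (𝓝 m₀)) (hS : Tendsto S l (𝓝 S₀))
    (hS_psd : ∀ᶠ a in l, (S a).PosSemidef) (hS₀_psd : S₀.PosSemidef) :
    Tendsto (β := ProbabilityMeasure (EuclideanSpace ℝ ι))
      (fun a ↦ ⟨multivariateGaussian (m a) (S a), inferInstance⟩) l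
      (𝓝 ⟨multivariateGaussian m₀ S₀, inferInstance⟩) := by
  refine tendsto_probabilityMeasure_of_tendsto_charFun fun t ↦ ?_
  have continuous_gaussian_charFun : Continuous fun p : EuclideanSpace ℝ ι × Matrix ι ι ℝ ↦
      Complex.exp (⟪t, p.1⟫ * Complex.I - (t ⬝ᵥ p.2 *ᵥ t : ℝ) / 2) := by
    fun_prop
  simp only [ProbabilityMeasure.coe_mk, charFun_multivariateGaussian hS₀_psd]
  refine ((continuous_gaussian_charFun.tendsto (m₀, S₀)).comp (hm.prodMk_nhds hS)).congr' ?_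
  filter_upwards [hS_psd] with a ha
  exact (charFun_multivariateGaussian ha t).symm

variable {Ω : Type*} [MeasurableSpace Ω] {P : Measure Ω} {X : ι → Ω → ℝ}

theorem map_toLp_eq_multivariateGaussian [DecidableEq ι]
    (hX : HasGaussianLaw (fun ω ↦ (X · ω)) P) :
    P.map (fun ω ↦ toLp 2 (X · ω)) =
      multivariateGaussian (toLp 2 fun i ↦ P[X i]) (covarianceMatrix P X) := by
  have := hX.isProbabilityMeasure
  have hX_memLp i : MemLp (X i) 2 P := (hX.eval i).memLp_two
  have hX_toLp := hX.toLp_pi 2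
  have := hX_toLp.isGaussian_map
  apply IsGaussian.ext
  · rw [integral_map hX_toLp.aemeasurable (by fun_prop)]
    ext i
    simpa using eval_integral_piLp (f := fun ω ↦ toLp 2 (X · ω))
      (fun i ↦ (hX_memLp i).integrable one_le_two) i
  · ext x y
    rw [covarianceBilin_map_toLp hX_memLp,
      covarianceBilin_multivariateGaussian (posSemidef_covarianceMatrix hX_memLp)]

theorem hasGaussianLaw_pi_of_forall_sum (hX : ∀ i, AEMeasurable (X i) P)
    (h : ∀ c : ι → ℝ, HasGaussianLaw (fun ω ↦ ∑ i, c i * X i ω) P) :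
    HasGaussianLaw (fun ω ↦ (X · ω)) P where
  isGaussian_map := isGaussian_of_isGaussian_map fun L ↦ by
    classical
    rw [AEMeasurable.map_map_of_aemeasurable (by fun_prop) (by fun_prop)]
    convert! (h fun i ↦ L fun j ↦ if i = j then 1 else 0).isGaussian_map using 3 with ω
    simpa [mul_comm] using L.toLinearMap.pi_apply_eq_sum_univ (X · ω)

theorem integral_eq_zero_of_map_sum_eq_gaussianReal (hX : ∀ i, AEMeasurable (X i) P)
    {v : (ι → ℝ) → NNReal}
    (h : ∀ c : ι → ℝ, P.map (fun ω ↦ ∑ i, c i * X i ω) = gaussianReal 0 (v c)) (i : ι) :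
    P[X i] = 0 := by
  classical
  have hXi : P.map (X i) = gaussianReal 0 (v (Pi.single i 1)) := by
    simpa [Pi.single_apply] using h (Pi.single i 1)
  rw [← integral_map (f := fun x ↦ x) (hX i) (by fun_prop), hXi, integral_id_gaussianReal]

end MultivariateGaussian

theorem exists_pos_multivariateGaussian_lt {ι : Type*} [Fintype ι] [DecidableEq ι]
    {m₀ : EuclideanSpace ℝ ι} {S₀ : Matrix ι ι ℝ} (hS₀ : S₀.PosSemidef)
    {F : Set (EuclideanSpace ℝ ι)} (hF : IsClosed F) {c : ℝ≥0∞}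
    (hc : multivariateGaussian m₀ S₀ F < c) :
    ∃ ε > 0, ∀ (m : EuclideanSpace ℝ ι) (S : Matrix ι ι ℝ), S.PosSemidef →
      (∀ i, |m i - m₀ i| ≤ ε) → (∀ i j, |S i j - S₀ i j| ≤ ε) →
      multivariateGaussian m S F < c := by
  let l : Filter ((ι → ℝ) × (ι → ι → ℝ)) := 𝓝[{p | (of p.2).PosSemidef}] (m₀.ofLp, of.symm S₀)
  have tendsto_id : Tendsto id l (𝓝 (m₀.ofLp, of.symm S₀)) := nhdsWithin_le_nhds
  have tendsto_law := tendsto_multivariateGaussian (l := l) (m := fun p ↦ toLp 2 p.1)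
    (S := fun p ↦ of p.2) (((PiLp.continuous_toLp 2 _).tendsto _).comp tendsto_id.fst_nhds)
    tendsto_id.snd_nhds eventually_mem_nhdsWithin hS₀
  have eventually_lt := eventually_measure_lt_of_tendsto_of_isClosed tendsto_law hF hc
  rw [eventually_nhdsWithin_iff, Metric.nhds_basis_closedBall.eventually_iff] at eventually_lt
  obtain ⟨ε, hε, hball⟩ := eventually_lt
  refine ⟨ε, hε, fun m S hS hm hSS₀ ↦ hball (x := (m.ofLp, of.symm S)) ?_ hS⟩
  simp only [Metric.mem_closedBall, Prod.dist_eq, max_le_iff, dist_pi_le_iff hε.le, Real.dist_eq]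
  exact ⟨hm, hSS₀⟩

theorem two_mul_half_pow_lt_half_pow_sub_two {k : ℕ} (hk : 2 ≤ k) :
    2 * (1 / 2 : ℝ≥0∞) ^ k < (1 / 2) ^ (k - 2) := by
  obtain ⟨n, rfl⟩ := Nat.exists_eq_add_of_le' hk
  calc 2 * (1 / 2 : ℝ≥0∞) ^ (n + 2)
    _ = (1 / 2) ^ n / 2 := by
      rw [pow_succ' _ (n + 1), ← mul_assoc,
        ENNReal.mul_div_cancel two_ne_zero ENNReal.ofNat_ne_top, one_mul, pow_succ, mul_one_div]
    _ < (1 / 2) ^ n := ENNReal.half_lt_self (by simp) (by simp)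

theorem weakly_correlated_gaussian_sign_change_general {ι : Type*} [Fintype ι] [DecidableEq ι]
    {c : ℝ≥0∞} (hc : 2 * (1 / 2) ^ Fintype.card ι < c) :
    ∃ ε > (0 : ℝ), ∀ {Ω : Type*} [MeasurableSpace Ω] (P : Measure Ω) (Z : ι → Ω → ℝ),
      HasGaussianLaw (fun ω ↦ (Z · ω)) P →
      (∀ i, |P[Z i]| ≤ ε) →
      (∀ i j, |covarianceMatrix P Z i j - (1 : Matrix ι ι ℝ) i j| ≤ ε) →
      P {ω | (∀ i, 0 ≤ Z i ω) ∨ ∀ i, Z i ω ≤ 0} < c := by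
  obtain ⟨ε, hε, h⟩ := exists_pos_multivariateGaussian_lt (m₀ := 0) (S₀ := (1 : Matrix ι ι ℝ))
    .one (isClosed_sameSign ι)
    (by simpa only [multivariateGaussian_zero_one] using (stdGaussian_sameSign_le ι).trans_lt hc)
  refine ⟨ε, hε, fun {Ω} _ P Z hZ hmean hcov ↦ ?_⟩
  have := hZ.isProbabilityMeasure
  have hZ_memLp i : MemLp (Z i) 2 P := (hZ.eval i).memLp_two
  have law_lt := h (toLp 2 fun i ↦ P[Z i]) _ (posSemidef_covarianceMatrix hZ_memLp)
    (by simpa using hmean) hcov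
  rwa [← map_toLp_eq_multivariateGaussian hZ, Measure.map_apply_of_aemeasurable
    (hZ.toLp_pi 2).aemeasurable (isClosed_sameSign ι).measurableSet] at law_lt

end

/-- for each `k` there is `ε > 0` such that any mean-zero Gaussian
vector `(Z 1, …, Z k)` with unit variances and pairwise correlations at most `ε`
in absolute value has all coordinates of the same sign with probability at most
`2^(-k+2)`.  The Gaussian hypothesis is expressed by requiring every linear
combination to have a (mean-zero) Gaussian law with the appropriate variance. -/
theorem weakly_correlated_gaussian_sign_change (k : ℕ) :
    ∃ ε > (0:ℝ), ∀ {Ω : Type} [MeasurableSpace Ω] (P : Measure Ω),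
      IsProbabilityMeasure P → ∀ (Z : Fin k → Ω → ℝ),
      (∀ j, Measurable (Z j)) →
      (∀ c : Fin k → ℝ,
        P.map (fun ω => ∑ i, c i * Z i ω) =
          gaussianReal 0
            (∑ i, ∑ j, c i * c j * ∫ ω, Z i ω * Z j ω ∂P).toNNReal) →
      (∀ j, ∫ ω, (Z j ω) ^ 2 ∂P = 1) →
      (∀ i j, i ≠ j → |∫ ω, Z i ω * Z j ω ∂P| ≤ ε) →
      P {ω | (∀ j, 0 < Z j ω) ∨ (∀ j, Z j ω < 0)} ≤ (1 / 2) ^ (k - 2) := by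
  rcases lt_or_ge k 2 with hk | hk
  · refine ⟨1, one_pos, fun P _ Z _ _ _ _ ↦ ?_⟩
    simpa only [Nat.sub_eq_zero_of_le hk.le, pow_zero] using prob_le_one
  obtain ⟨ε, hε, h⟩ := weakly_correlated_gaussian_sign_change_general (ι := Fin k)
    (by simpa only [Fintype.card_fin] using two_mul_half_pow_lt_half_pow_sub_two hk)
  refine ⟨ε, hε, fun P _ Z hZ hlin hvar hcorr ↦ ?_⟩
  have hZ_gaussian : HasGaussianLaw (fun ω ↦ (Z · ω)) P :=
    hasGaussianLaw_pi_of_forall_sum (fun i ↦ (hZ i).aemeasurable)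
      fun c ↦ ⟨hlin c ▸ isGaussian_gaussianReal _ _⟩
  have hmean i : P[Z i] = 0 :=
    integral_eq_zero_of_map_sum_eq_gaussianReal (fun i ↦ (hZ i).aemeasurable) hlin i
  have hcov := abs_covarianceMatrix_sub_one_le hε.le hmean hvar hcorr
  refine (measure_mono ?_).trans (h P Z hZ_gaussian (by simp [hmean, hε.le]) hcov).le
  exact fun ω ↦ Or.imp (fun hpos j ↦ (hpos j).le) fun hneg j ↦ (hneg j).le
end

section
/- Let g be the mean-zero Gaussian process on ℝ with covariance E[g(x)g(y)] = ∫_0^1 e^{(x+y)t} dt, which is almost surely smooth. Then for each M > 0, P(∃ x ∈ [-M,M] such that |g(x)| ≤ ε and |g'(x)| ≤ ε^{1/4}) = O(ε^{1/8}) as ε → 0. -/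
open MeasureTheory ProbabilityTheory Real
open scoped ENNReal

open Filter Set Topology fwdDiff

/-!
Put `σ = ε ^ (1 / 4)`. If `|g''| ≤ σ⁻²` on `[-M, M]` and somewhere `|g| ≤ σ⁴` and `|g'| ≤ σ`, then
by Taylor's formula `|g| ≤ 3σ⁴` at both ends of a cell of a mesh of width `σ³`. The Gram determinant
of `t ↦ exp (x * t)` and `t ↦ exp (y * t)` in `L²([0, 1])` is at least a constant times
`(y - x) ^ 2`, so the Gaussian pair of values at the ends of one cell is that small with probability
`O(σ⁸ / σ³) = O(σ⁵)`. Summed over the `O(σ⁻³)` cells this is `O(σ²)`.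

It remains to see that `sup |g''|` exceeds `T` with probability `O(1 / T)`. On a mesh, the second
difference quotients are bounded by the first one plus the sum of all third differences, whose
expectation is bounded uniformly in the mesh since the differences are Gaussian with explicit
variance. Refining the mesh, Fatou's lemma and Markov's inequality give the claim.
-/

section FiniteDifferences

lemma contDiff_fwdDiff {𝕜 E F : Type*} [NontriviallyNormedField 𝕜] [NormedAddCommGroup E]
    [NormedSpace 𝕜 E] [NormedAddCommGroup F] [NormedSpace 𝕜 F] {m : WithTop ℕ∞} {f : E → F}
    (hf : ContDiff 𝕜 m f) (h : E) : ContDiff 𝕜 m (Δ_[h] f) :=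
  (hf.comp (contDiff_id.add contDiff_const)).sub hf

lemma iteratedDeriv_fwdDiff {n : ℕ} {f : ℝ → ℝ} (hf : ContDiff ℝ n f) (h x : ℝ) :
    iteratedDeriv n (Δ_[h] f) x = iteratedDeriv n f (x + h) - iteratedDeriv n f x := by
  have hshift : ContDiff ℝ n fun y => f (y + h) := hf.comp (contDiff_id.add contDiff_const)
  change iteratedDeriv n ((fun y => f (y + h)) - f) x = _
  rw [iteratedDeriv_sub hshift.contDiffAt hf.contDiffAt, iteratedDeriv_comp_add_const]

lemma exists_fwdDiff_iterate_eq_pow_mul_iteratedDeriv {h : ℝ} (hh : 0 < h) {n : ℕ} {f : ℝ → ℝ}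
    (hf : ContDiff ℝ n f) (a : ℝ) :
    ∃ ξ ∈ Icc a (a + n * h), (Δ_[h])^[n] f a = h ^ n * iteratedDeriv n f ξ := by
  induction n generalizing f with
  | zero => exact ⟨a, by simp, by simp⟩
  | succ n ih =>
    have hfn : ContDiff ℝ n f := hf.of_le (by exact_mod_cast n.le_succ)
    obtain ⟨η, hη, hη_eq⟩ := ih (contDiff_fwdDiff hfn h)
    have hdiff : Differentiable ℝ (iteratedDeriv n f) :=
      hf.differentiable_iteratedDeriv n (by exact_mod_cast n.lt_succ_self)
    obtain ⟨ξ, hξ, hξ_eq⟩ := exists_deriv_eq_slope (iteratedDeriv n f) (lt_add_of_pos_right η hh)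
      hdiff.continuous.continuousOn hdiff.differentiableOn
    refine ⟨ξ, ⟨hη.1.trans hξ.1.le, ?_⟩, ?_⟩
    · push_cast
      linarith [hη.2, hξ.2]
    · rw [Function.iterate_succ_apply, hη_eq, iteratedDeriv_fwdDiff hfn, iteratedDeriv_succ, hξ_eq,
        add_sub_cancel_left]
      field_simp
      ring

lemma fwdDiff_iterate_eq_sum_fin (h a : ℝ) (n : ℕ) (f : ℝ → ℝ) :
    (Δ_[h])^[n] f a =
      ∑ i : Fin (n + 1), ((-1) ^ (n - i.val) * n.choose i.val) * f (a + i.val * h) := by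
  rw [fwdDiff_iter_eq_sum_shift, Finset.sum_range]
  simp

lemma enorm_shift_le_add_sum_enorm_fwdDiff {E : Type*} [NormedAddCommGroup E] (f : ℝ → E)
    (a h : ℝ) (k : ℕ) :
    ‖f (a + k * h)‖ₑ ≤ ‖f a‖ₑ + ∑ j ∈ Finset.range k, ‖Δ_[h] f (a + j * h)‖ₑ := by
  have htel : f (a + k * h) = f a + ∑ j ∈ Finset.range k, Δ_[h] f (a + j * h) := by
    have hstep (j : ℕ) : Δ_[h] f (a + j * h) = f (a + (j + 1 : ℕ) * h) - f (a + j * h) := by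
      simp only [fwdDiff]
      push_cast
      ring_nf
    simp only [hstep]
    rw [Finset.sum_range_sub (fun j : ℕ => f (a + j * h))]
    simp
  rw [htel]
  refine (enorm_add_le (f a) _).trans ?_
  gcongr
  exact enorm_sum_le _ _

lemma exists_mem_Icc_mesh {a b x : ℝ} (hx : x ∈ Icc a b) {N : ℕ} (hN : 0 < N) :
    ∃ k < N, x ∈ Icc (a + k * ((b - a) / N)) (a + k * ((b - a) / N) + (b - a) / N) := by
  set h := (b - a) / N with h_def
  have hh : 0 ≤ h := div_nonneg (by linarith [hx.1, hx.2]) N.cast_nonneg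
  have hNh : a + N * h = b := by rw [h_def]; field_simp; ring
  obtain rfl | hax := hx.1.eq_or_lt
  · exact ⟨0, hN, by simpa using hh⟩
  have hmono : Monotone fun k : ℕ => a + k * h := fun k l hkl => by dsimp only; gcongr
  have hmem : x ∈ ⋃ k ∈ Ico 0 N, Ioc (a + (k : ℕ) * h) (a + (k + 1 : ℕ) * h) := by
    refine (hmono.biUnion_Ico_Ioc_map_succ 0 N).superset ?_
    simpa [hNh] using And.intro hax hx.2
  simp only [mem_iUnion] at hmem
  obtain ⟨k, hk, hxk⟩ := hmem
  refine ⟨k, hk.2, hxk.1.le, hxk.2.trans_eq ?_⟩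
  push_cast
  ring

/-- The discrete analogue, on the mesh `a + j * h` with `j < N`, of the majorant
`|f⁽ⁿ⁾(a)| + ∫ |f⁽ⁿ⁺¹⁾|` of `|f⁽ⁿ⁾|`. Only values of `f` enter, so its expectation along a random
`f` is computed from finite-dimensional laws. -/
noncomputable def fwdDiffMajorant (n : ℕ) (a h : ℝ) (N : ℕ) (f : ℝ → ℝ) : ℝ≥0∞ :=
  ENNReal.ofReal (h ^ n)⁻¹ *
    (‖(Δ_[h])^[n] f a‖ₑ + ∑ j ∈ Finset.range N, ‖(Δ_[h])^[n + 1] f (a + j * h)‖ₑ)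

lemma exists_enorm_iteratedDeriv_le_fwdDiffMajorant {n N k : ℕ} {h : ℝ} (hh : 0 < h) {f : ℝ → ℝ}
    (hf : ContDiff ℝ n f) (a : ℝ) (hk : k ≤ N) :
    ∃ ξ ∈ Icc (a + k * h) (a + k * h + n * h),
      ‖iteratedDeriv n f ξ‖ₑ ≤ fwdDiffMajorant n a h N f := by
  obtain ⟨ξ, hξ, hξ_eq⟩ := exists_fwdDiff_iterate_eq_pow_mul_iteratedDeriv hh hf (a + k * h)
  refine ⟨ξ, hξ, ?_⟩
  have hquot : iteratedDeriv n f ξ = (h ^ n)⁻¹ * (Δ_[h])^[n] f (a + k * h) := by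
    rw [hξ_eq, inv_mul_cancel_left₀ (by positivity)]
  rw [hquot, enorm_mul, Real.enorm_of_nonneg (by positivity), fwdDiffMajorant]
  gcongr
  refine (enorm_shift_le_add_sum_enorm_fwdDiff ((Δ_[h])^[n] f) a h k).trans ?_
  simp only [Function.iterate_succ_apply']
  gcongr

lemma enorm_iteratedDeriv_le_liminf_fwdDiffMajorant {n : ℕ} {f : ℝ → ℝ} (hf : ContDiff ℝ n f)
    {a b : ℝ} (hab : a < b) {x : ℝ} (hx : x ∈ Icc a b) :
    ‖iteratedDeriv n f x‖ₑ ≤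
      liminf (fun N : ℕ => fwdDiffMajorant n a ((b - a) / (N + 1 : ℕ)) (N + 1) f) atTop := by
  have hnear (N : ℕ) : ∃ ξ, dist ξ x ≤ (n + 1) * ((b - a) / (N + 1 : ℕ)) ∧
      ‖iteratedDeriv n f ξ‖ₑ ≤ fwdDiffMajorant n a ((b - a) / (N + 1 : ℕ)) (N + 1) f := by
    have hh : 0 < (b - a) / (N + 1 : ℕ) := div_pos (sub_pos.2 hab) (by positivity)
    obtain ⟨k, hkN, hxk⟩ := exists_mem_Icc_mesh hx N.succ_pos
    obtain ⟨ξ, hξ, hle⟩ := exists_enorm_iteratedDeriv_le_fwdDiffMajorant hh hf a hkN.le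
    refine ⟨ξ, ?_, hle⟩
    have hnh : 0 ≤ n * ((b - a) / (N + 1 : ℕ)) := by positivity
    rw [Real.dist_eq, abs_le]
    constructor <;> linarith [hξ.1, hξ.2, hxk.1, hxk.2]
  choose ξ hξ_dist hξ_le using hnear
  have hmesh : Tendsto (fun N : ℕ => (n + 1) * ((b - a) / (N + 1 : ℕ))) atTop (𝓝 0) := by
    simpa using (((tendsto_const_div_atTop_nhds_zero_nat (b - a)).comp
      (tendsto_add_atTop_nat 1)).const_mul (n + 1 : ℝ))
  have hξ : Tendsto ξ atTop (𝓝 x) :=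
    tendsto_iff_dist_tendsto_zero.2 (squeeze_zero (fun _ => dist_nonneg) hξ_dist hmesh)
  have hlim : Tendsto (fun N => ‖iteratedDeriv n f (ξ N)‖ₑ) atTop (𝓝 ‖iteratedDeriv n f x‖ₑ) :=
    (((hf.continuous_iteratedDeriv n le_rfl).tendsto x).comp hξ).enorm
  rw [← hlim.liminf_eq]
  exact liminf_le_liminf (Eventually.of_forall hξ_le)

end FiniteDifferences

section RandomFunctions

variable {Ω : Type*} [MeasurableSpace Ω] {P : Measure Ω} {g : Ω → ℝ → ℝ} {a b : ℝ}

lemma aemeasurable_fwdDiff_iterate (hg : ∀ x, AEMeasurable (fun ω => g ω x) P) (h : ℝ) (n : ℕ)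
    (x : ℝ) : AEMeasurable (fun ω => (Δ_[h])^[n] (g ω) x) P := by
  simp only [fwdDiff_iterate_eq_sum_fin]
  exact Finset.aemeasurable_fun_sum _ fun i _ => (hg _).const_mul _

lemma aemeasurable_fwdDiffMajorant (hg : ∀ x, AEMeasurable (fun ω => g ω x) P) (n : ℕ) (a h : ℝ)
    (N : ℕ) : AEMeasurable (fun ω => fwdDiffMajorant n a h N (g ω)) P :=
  (((aemeasurable_fwdDiff_iterate hg h n a).enorm).add (Finset.aemeasurable_fun_sum _ fun _ _ =>
    (aemeasurable_fwdDiff_iterate hg h (n + 1) _).enorm)).const_mul _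

lemma lintegral_fwdDiffMajorant_le (hg : ∀ x, AEMeasurable (fun ω => g ω x) P) {n N : ℕ} {h B : ℝ}
    (hh : 0 < h) (hB : 0 ≤ B)
    (hn : ∫⁻ ω, ‖(Δ_[h])^[n] (g ω) a‖ₑ ∂P ≤ ENNReal.ofReal (B * h ^ n))
    (hn' : ∀ j < N, ∫⁻ ω, ‖(Δ_[h])^[n + 1] (g ω) (a + j * h)‖ₑ ∂P ≤
      ENNReal.ofReal (B * h ^ (n + 1))) :
    ∫⁻ ω, fwdDiffMajorant n a h N (g ω) ∂P ≤ ENNReal.ofReal (B * (1 + N * h)) := by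
  have hmeas (m : ℕ) (x : ℝ) : AEMeasurable (fun ω => ‖(Δ_[h])^[m] (g ω) x‖ₑ) P :=
    (aemeasurable_fwdDiff_iterate hg h m x).enorm
  simp only [fwdDiffMajorant]
  rw [lintegral_const_mul' _ _ ENNReal.ofReal_ne_top, lintegral_add_left' (hmeas n a),
    lintegral_finsetSum' _ fun _ _ => hmeas (n + 1) _]
  calc _ ≤ ENNReal.ofReal (h ^ n)⁻¹ * (ENNReal.ofReal (B * h ^ n) +
        ∑ _j ∈ Finset.range N, ENNReal.ofReal (B * h ^ (n + 1))) := by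
        gcongr with j hj
        exact hn' j (Finset.mem_range.1 hj)
    _ = ENNReal.ofReal ((h ^ n)⁻¹ * (B * h ^ n + N * (B * h ^ (n + 1)))) := by
        rw [ENNReal.ofReal_mul (p := (h ^ n)⁻¹) (by positivity),
          ENNReal.ofReal_add (by positivity) (by positivity),
          ENNReal.ofReal_mul (p := (N : ℝ)) N.cast_nonneg]
        simp
    _ = ENNReal.ofReal (B * (1 + N * h)) := by
        congr 1
        field_simp
        ring

lemma aemeasurable_liminf {F : ℕ → Ω → ℝ≥0∞} (hF : ∀ N, AEMeasurable (F N) P) :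
    AEMeasurable (fun ω => liminf (F · ω) atTop) P := by
  refine ⟨fun ω => liminf (fun N => (hF N).mk _ ω) atTop,
    .liminf fun N => (hF N).measurable_mk, ?_⟩
  filter_upwards [ae_all_iff.2 fun N => (hF N).ae_eq_mk] with ω hω
  simp only [hω]

lemma lintegral_liminf_fwdDiffMajorant_le (hg : ∀ x, AEMeasurable (fun ω => g ω x) P) {n : ℕ}
    (hab : a < b) {B : ℝ} (hB : 0 ≤ B)
    (hdiff : ∀ m ∈ Icc n (n + 1), ∀ x ∈ Icc a b, ∀ h ∈ Ioc 0 (b - a),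
      ∫⁻ ω, ‖(Δ_[h])^[m] (g ω) x‖ₑ ∂P ≤ ENNReal.ofReal (B * h ^ m)) :
    ∫⁻ ω, liminf (fun N : ℕ => fwdDiffMajorant n a ((b - a) / (N + 1 : ℕ)) (N + 1) (g ω)) atTop ∂P ≤
      ENNReal.ofReal (B * (1 + (b - a))) := by
  have hmesh (N : ℕ) :
      ∫⁻ ω, fwdDiffMajorant n a ((b - a) / (N + 1 : ℕ)) (N + 1) (g ω) ∂P ≤
        ENNReal.ofReal (B * (1 + (b - a))) := by
    have hba : 0 < b - a := sub_pos.2 hab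
    set h := (b - a) / (N + 1 : ℕ) with h_def
    have hh : h ∈ Ioc 0 (b - a) := ⟨by positivity, div_le_self hba.le (by simp)⟩
    have hNh : (N + 1 : ℕ) * h = b - a := by
      rw [h_def]
      field_simp
    have hmem (j : ℕ) (hj : j < N + 1) : a + j * h ∈ Icc a b := by
      have hjh : j * h ≤ (N + 1 : ℕ) * h :=
        mul_le_mul_of_nonneg_right (by exact_mod_cast hj.le) hh.1.le
      exact ⟨le_add_of_nonneg_right (mul_nonneg j.cast_nonneg hh.1.le), by linarith⟩
    rw [← hNh]
    exact lintegral_fwdDiffMajorant_le hg hh.1 hB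
      (hdiff n (by simp) a (left_mem_Icc.2 hab.le) h hh)
      fun j hj => hdiff (n + 1) (by simp) _ (hmem j hj) h hh
  calc _ ≤ liminf (fun N : ℕ =>
        ∫⁻ ω, fwdDiffMajorant n a ((b - a) / (N + 1 : ℕ)) (N + 1) (g ω) ∂P) atTop :=
        lintegral_liminf_le' fun N => aemeasurable_fwdDiffMajorant hg n a _ _
    _ ≤ liminf (fun _ : ℕ => ENNReal.ofReal (B * (1 + (b - a)))) atTop :=
        liminf_le_liminf (.of_forall hmesh)
    _ = _ := liminf_const _

lemma measure_exists_le_abs_iteratedDeriv_le (hg : ∀ x, AEMeasurable (fun ω => g ω x) P) {n : ℕ}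
    (hsmooth : ∀ᵐ ω ∂P, ContDiff ℝ n (g ω)) (hab : a < b) {B : ℝ} (hB : 0 ≤ B)
    (hdiff : ∀ m ∈ Icc n (n + 1), ∀ x ∈ Icc a b, ∀ h ∈ Ioc 0 (b - a),
      ∫⁻ ω, ‖(Δ_[h])^[m] (g ω) x‖ₑ ∂P ≤ ENNReal.ofReal (B * h ^ m))
    {T : ℝ} (hT : 0 < T) :
    P {ω | ∃ x ∈ Icc a b, T ≤ |iteratedDeriv n (g ω) x|} ≤
      ENNReal.ofReal (B * (1 + (b - a)) / T) := by
  set F : ℕ → Ω → ℝ≥0∞ :=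
    fun N ω => fwdDiffMajorant n a ((b - a) / (N + 1 : ℕ)) (N + 1) (g ω)
  have hF (N : ℕ) : AEMeasurable (F N) P := aemeasurable_fwdDiffMajorant hg n a _ _
  calc P {ω | ∃ x ∈ Icc a b, T ≤ |iteratedDeriv n (g ω) x|}
      ≤ P {ω | ENNReal.ofReal T ≤ liminf (F · ω) atTop} := by
        refine measure_mono_ae ?_
        filter_upwards [hsmooth] with ω hω
        rintro ⟨x, hx, hTx⟩
        refine le_trans ?_ (enorm_iteratedDeriv_le_liminf_fwdDiffMajorant hω hab hx)
        rw [← ofReal_norm, Real.norm_eq_abs]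
        gcongr
    _ ≤ (∫⁻ ω, liminf (F · ω) atTop ∂P) / ENNReal.ofReal T :=
        meas_ge_le_lintegral_div (aemeasurable_liminf hF) (by simpa using hT) ENNReal.ofReal_ne_top
    _ ≤ ENNReal.ofReal (B * (1 + (b - a)) / T) := by
        rw [ENNReal.ofReal_div_of_pos hT]
        gcongr
        exact lintegral_liminf_fwdDiffMajorant_le hg hab hB hdiff

end RandomFunctions

section Taylor

variable {f : ℝ → ℝ} {a b x T : ℝ}

lemma abs_deriv_le_add_of_abs_iteratedDeriv_two_le (hf : ContDiff ℝ 2 f)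
    (hT : ∀ z ∈ Icc a b, |iteratedDeriv 2 f z| ≤ T) {y : ℝ} (hx : x ∈ Icc a b)
    (hy : y ∈ Icc a b) : |deriv f y| ≤ |deriv f x| + T * |y - x| := by
  have hdiff : Differentiable ℝ (deriv f) := by
    simpa using hf.differentiable_iteratedDeriv 1 (by norm_num)
  have hbound : ∀ z ∈ Icc a b, ‖deriv (deriv f) z‖ ≤ T := by
    simpa [iteratedDeriv_succ] using hT
  have hsub := (convex_Icc a b).norm_image_sub_le_of_norm_deriv_le (fun z _ => hdiff z)
    hbound hx hy
  rw [Real.norm_eq_abs, Real.norm_eq_abs] at hsub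
  linarith [abs_sub_abs_le_abs_sub (deriv f y) (deriv f x)]

lemma abs_le_add_of_abs_iteratedDeriv_two_le (hf : ContDiff ℝ 2 f)
    (hT : ∀ z ∈ Icc a b, |iteratedDeriv 2 f z| ≤ T) {y δ : ℝ} (hx : x ∈ Icc a b)
    (hy : y ∈ Icc a b) (hxy : |y - x| ≤ δ) :
    |f y| ≤ |f x| + (|deriv f x| + T * δ) * δ := by
  have hT0 : 0 ≤ T := (abs_nonneg _).trans (hT x hx)
  have hsegment : uIcc x y ⊆ Icc a b := uIcc_subset_Icc hx hy
  have hbound : ∀ z ∈ uIcc x y, ‖deriv f z‖ ≤ |deriv f x| + T * δ := fun z hz => by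
    have hzx : |z - x| ≤ δ := (abs_sub_left_of_mem_uIcc hz).trans hxy
    exact (abs_deriv_le_add_of_abs_iteratedDeriv_two_le hf hT hx (hsegment hz)).trans (by gcongr)
  have hsub := (convex_uIcc x y).norm_image_sub_le_of_norm_deriv_le
    (fun z _ => hf.differentiable two_ne_zero z) hbound left_mem_uIcc right_mem_uIcc
  have hδ : (|deriv f x| + T * δ) * |y - x| ≤ (|deriv f x| + T * δ) * δ := by
    have := (abs_nonneg _).trans hxy
    gcongr
  rw [Real.norm_eq_abs, Real.norm_eq_abs] at hsub
  linarith [abs_sub_abs_le_abs_sub (f y) (f x)]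

lemma exists_mesh_abs_le_and_abs_le (hf : ContDiff ℝ 2 f)
    (hT : ∀ z ∈ Icc a b, |iteratedDeriv 2 f z| ≤ T) {N : ℕ} (hN : 0 < N) {δ : ℝ}
    (hδ : δ = (b - a) / N) (hx : x ∈ Icc a b) :
    ∃ k < N, |f (a + k * δ)| ≤ |f x| + (|deriv f x| + T * δ) * δ ∧
      |f (a + k * δ + δ)| ≤ |f x| + (|deriv f x| + T * δ) * δ := by
  obtain ⟨k, hkN, hxk⟩ := exists_mem_Icc_mesh hx hN
  rw [← hδ] at hxk
  obtain ⟨hkx, hxk'⟩ := hxk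
  have hδ0 : 0 ≤ δ := hδ ▸ div_nonneg (by linarith [hx.1, hx.2]) N.cast_nonneg
  have hkδ : 0 ≤ k * δ := by positivity
  have hlast : a + k * δ + δ ≤ b := by
    have hk : ((k : ℝ) + 1) * δ ≤ N * δ := by
      gcongr
      exact_mod_cast hkN
    have hNδ : N * δ = b - a := by
      rw [hδ]
      field_simp
    linarith
  exact ⟨k, hkN,
    abs_le_add_of_abs_iteratedDeriv_two_le hf hT hx ⟨by linarith, by linarith⟩
      (abs_le.2 ⟨by linarith, by linarith⟩),
    abs_le_add_of_abs_iteratedDeriv_two_le hf hT hx ⟨by linarith, hlast⟩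
      (abs_le.2 ⟨by linarith, by linarith⟩)⟩

end Taylor

section Mesh

variable {Ω : Type*} [MeasurableSpace Ω] {P : Measure Ω} {g : Ω → ℝ → ℝ} {a b L : ℝ}

lemma measure_exists_mesh_le
    (hpair : ∀ x ∈ Icc a b, ∀ y ∈ Icc a b, x < y → ∀ r ≥ 0,
      P {ω | |g ω x| ≤ r ∧ |g ω y| ≤ r} ≤ ENNReal.ofReal (L * r ^ 2 / (y - x)))
    (hab : a < b) {N : ℕ} {δ r : ℝ} (hN : 0 < N) (hδ : δ = (b - a) / N) (hr : 0 ≤ r) :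
    P {ω | ∃ k < N, |g ω (a + k * δ)| ≤ r ∧ |g ω (a + k * δ + δ)| ≤ r} ≤
      ENNReal.ofReal (N * (L * r ^ 2 / δ)) := by
  have hδ0 : 0 < δ := hδ ▸ div_pos (sub_pos.2 hab) (by positivity)
  have hNδ : N * δ = b - a := by
    rw [hδ]
    field_simp
  have hcell (k : ℕ) (hk : k < N) :
      P {ω | |g ω (a + k * δ)| ≤ r ∧ |g ω (a + k * δ + δ)| ≤ r} ≤
        ENNReal.ofReal (L * r ^ 2 / δ) := by
    have hkδ : 0 ≤ k * δ := by positivity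
    have hk' : ((k : ℝ) + 1) * δ ≤ N * δ := by
      gcongr
      exact_mod_cast hk
    simpa using hpair _ ⟨by linarith, by linarith⟩ _ ⟨by linarith, by linarith⟩
      (lt_add_of_pos_right (a + k * δ) hδ0) r hr
  calc _ = P (⋃ k ∈ Finset.range N,
        {ω | |g ω (a + k * δ)| ≤ r ∧ |g ω (a + k * δ + δ)| ≤ r}) := by
        congr 1
        ext ω
        simp only [Finset.mem_range, mem_iUnion, mem_ofPred_eq, exists_prop]
    _ ≤ ∑ k ∈ Finset.range N, P {ω | |g ω (a + k * δ)| ≤ r ∧ |g ω (a + k * δ + δ)| ≤ r} :=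
        measure_biUnion_finset_le _ _
    _ ≤ ∑ _k ∈ Finset.range N, ENNReal.ofReal (L * r ^ 2 / δ) :=
        Finset.sum_le_sum fun k hk => hcell k (Finset.mem_range.1 hk)
    _ = ENNReal.ofReal (N * (L * r ^ 2 / δ)) := by
        rw [ENNReal.ofReal_mul N.cast_nonneg]
        simp

lemma measure_exists_abs_le_and_abs_deriv_le (hsmooth : ∀ᵐ ω ∂P, ContDiff ℝ 2 (g ω))
    {N : ℕ} {δ ε η T r : ℝ} (hN : 0 < N) (hδ : δ = (b - a) / N)
    (hr : ε + (η + T * δ) * δ ≤ r) :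
    P {ω | ∃ x ∈ Icc a b, |g ω x| ≤ ε ∧ |deriv (g ω) x| ≤ η} ≤
      P {ω | ∃ x ∈ Icc a b, T ≤ |iteratedDeriv 2 (g ω) x|} +
        P {ω | ∃ k < N, |g ω (a + k * δ)| ≤ r ∧ |g ω (a + k * δ + δ)| ≤ r} := by
  refine (measure_mono_ae ?_).trans (measure_union_le _ _)
  filter_upwards [hsmooth] with ω hω
  rintro ⟨x, hx, hgx, hgx'⟩
  refine or_iff_not_imp_left.2 fun hT => ?_
  have hT' : ∀ z ∈ Icc a b, |iteratedDeriv 2 (g ω) z| ≤ T := fun z hz => by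
    by_contra! hlt
    exact hT ⟨z, hz, hlt.le⟩
  obtain ⟨k, hkN, hk, hk'⟩ := exists_mesh_abs_le_and_abs_le hω hT' hN hδ hx
  have hδ0 : 0 ≤ δ := hδ ▸ div_nonneg (by linarith [hx.1, hx.2]) N.cast_nonneg
  have hle : |g ω x| + (|deriv (g ω) x| + T * δ) * δ ≤ r := le_trans (by gcongr) hr
  exact ⟨k, hkN, hk.trans hle, hk'.trans hle⟩

lemma exists_mesh_size {ℓ s : ℝ} (hℓ : 0 < ℓ) (hs : 0 < s) (hs1 : s ≤ 1) :
    ∃ N : ℕ, 0 < N ∧ ℓ / N ≤ s ∧ N * s ≤ ℓ + 1 := by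
  have hN : 0 < ⌈ℓ / s⌉₊ := Nat.ceil_pos.2 (by positivity)
  refine ⟨⌈ℓ / s⌉₊, hN, ?_, ?_⟩
  · rw [div_le_comm₀ (by positivity) hs]
    exact Nat.le_ceil _
  · calc ⌈ℓ / s⌉₊ * s ≤ (ℓ / s + 1) * s := by
          gcongr
          exact (Nat.ceil_lt_add_one (by positivity)).le
      _ = ℓ + s := by field_simp
      _ ≤ ℓ + 1 := by gcongr

lemma measure_exists_abs_le_pow_four_and_abs_deriv_le (hsmooth : ∀ᵐ ω ∂P, ContDiff ℝ 2 (g ω))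
    (hab : a < b) (hL : 0 ≤ L)
    (hpair : ∀ x ∈ Icc a b, ∀ y ∈ Icc a b, x < y → ∀ r ≥ 0,
      P {ω | |g ω x| ≤ r ∧ |g ω y| ≤ r} ≤ ENNReal.ofReal (L * r ^ 2 / (y - x)))
    {K : ℝ} (hK : 0 ≤ K)
    (htail : ∀ T > 0, P {ω | ∃ x ∈ Icc a b, T ≤ |iteratedDeriv 2 (g ω) x|} ≤
      ENNReal.ofReal (K / T))
    {σ : ℝ} (hσ : 0 < σ) (hσ1 : σ ≤ 1) :
    P {ω | ∃ x ∈ Icc a b, |g ω x| ≤ σ ^ 4 ∧ |deriv (g ω) x| ≤ σ} ≤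
      ENNReal.ofReal ((K + 9 * L * (b - a + 1) ^ 2 / (b - a)) * σ ^ 2) := by
  have hba : 0 < b - a := sub_pos.2 hab
  obtain ⟨N, hN, hδσ, hNσ⟩ := exists_mesh_size hba (pow_pos hσ 3) (pow_le_one₀ hσ.le hσ1)
  set δ := (b - a) / N with hδ
  have : 0 < δ := by positivity
  have hr : σ ^ 4 + (σ + (σ ^ 2)⁻¹ * δ) * δ ≤ 3 * σ ^ 4 :=
    calc σ ^ 4 + (σ + (σ ^ 2)⁻¹ * δ) * δ
        ≤ σ ^ 4 + (σ + (σ ^ 2)⁻¹ * σ ^ 3) * σ ^ 3 := by gcongr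
      _ = 3 * σ ^ 4 := by
          field_simp
          ring
  have hmesh : N * (L * (3 * σ ^ 4) ^ 2 / δ) ≤ 9 * L * (b - a + 1) ^ 2 / (b - a) * σ ^ 2 :=
    calc N * (L * (3 * σ ^ 4) ^ 2 / δ)
        = 9 * L * (N * σ ^ 3) ^ 2 / (b - a) * σ ^ 2 := by
          rw [hδ]
          field_simp
          ring
      _ ≤ _ := by gcongr
  calc _ ≤ _ := measure_exists_abs_le_and_abs_deriv_le hsmooth hN hδ hr
    _ ≤ ENNReal.ofReal (K / (σ ^ 2)⁻¹) + ENNReal.ofReal (N * (L * (3 * σ ^ 4) ^ 2 / δ)) :=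
        add_le_add (htail _ (by positivity))
          (measure_exists_mesh_le hpair hab hN hδ (by positivity))
    _ ≤ ENNReal.ofReal (K * σ ^ 2) +
          ENNReal.ofReal (9 * L * (b - a + 1) ^ 2 / (b - a) * σ ^ 2) := by
        rw [div_inv_eq_mul]
        gcongr
    _ = _ := by rw [← ENNReal.ofReal_add (by positivity) (by positivity), add_mul]

end Mesh

section GaussianLaws

open scoped NNReal

variable {Ω : Type*} [MeasurableSpace Ω] {P : Measure Ω}

lemma gaussianPDFReal_le_inv_sqrt (m : ℝ) {v : ℝ≥0} (hv : v ≠ 0) (x : ℝ) :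
    gaussianPDFReal m v x ≤ (√v)⁻¹ := by
  have hv' : (0 : ℝ) < v := by positivity
  have hexp : rexp (-(x - m) ^ 2 / (2 * v)) ≤ 1 :=
    exp_le_one_iff.2 (div_nonpos_of_nonpos_of_nonneg (by simpa using sq_nonneg (x - m))
      (by positivity))
  have hconst : (√(2 * π * v))⁻¹ ≤ (√v)⁻¹ := by
    gcongr
    exact le_mul_of_one_le_left hv'.le (by linarith [pi_gt_three])
  rw [gaussianPDFReal_def]
  exact (mul_le_of_le_one_right (by positivity) hexp).trans hconst

lemma gaussianReal_Icc_le (m : ℝ) {v : ℝ≥0} (hv : v ≠ 0) (a b : ℝ) :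
    gaussianReal m v (Icc a b) ≤ ENNReal.ofReal ((b - a) / √v) := by
  rw [gaussianReal_apply _ hv]
  calc ∫⁻ x in Icc a b, gaussianPDF m v x
      ≤ ∫⁻ _ in Icc a b, ENNReal.ofReal (√v)⁻¹ :=
        lintegral_mono fun x => ENNReal.ofReal_le_ofReal (gaussianPDFReal_le_inv_sqrt m hv x)
    _ = ENNReal.ofReal ((b - a) / √v) := by
        rw [setLIntegral_const, Real.volume_Icc, ← ENNReal.ofReal_mul (by positivity)]
        ring_nf

lemma map_Icc_le_of_hasGaussianLaw {X : Ω → ℝ} (hX : HasGaussianLaw X P) (hX_var : 0 < Var[X; P])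
    (a b : ℝ) : P.map X (Icc a b) ≤ ENNReal.ofReal ((b - a) / √Var[X; P]) := by
  simpa [hX.map_eq_gaussianReal, coe_toNNReal _ hX_var.le] using
    gaussianReal_Icc_le P[X] (toNNReal_pos.2 hX_var).ne' a b

lemma measure_mem_Icc_and_add_mul_mem_Icc_le_of_indepFun {X Z : Ω → ℝ} (hXZ : IndepFun X Z P)
    (hX : HasGaussianLaw X P) (hZ : HasGaussianLaw Z P) (hX_var : 0 < Var[X; P])
    (hZ_var : 0 < Var[Z; P]) (ρ : ℝ) {a b : ℝ} (hab : a ≤ b) (c d : ℝ) :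
    P {ω | X ω ∈ Icc a b ∧ Z ω + ρ * X ω ∈ Icc c d} ≤
      ENNReal.ofReal ((b - a) * (d - c) / (√Var[X; P] * √Var[Z; P])) := by
  have := hX.isProbabilityMeasure
  set S : Set (ℝ × ℝ) := {p | p.1 ∈ Icc a b ∧ p.2 + ρ * p.1 ∈ Icc c d}
  have hS : MeasurableSet S := by
    exact (measurable_fst measurableSet_Icc).inter
      ((measurable_snd.add (measurable_fst.const_mul ρ)) measurableSet_Icc)
  have hslice (x : ℝ) : P.map Z (Prod.mk x ⁻¹' S) ≤
      (Icc a b).indicator (fun _ => ENNReal.ofReal ((d - c) / √Var[Z; P])) x := by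
    by_cases hx : x ∈ Icc a b
    · rw [indicator_of_mem hx]
      convert map_Icc_le_of_hasGaussianLaw hZ hZ_var (c - ρ * x) (d - ρ * x) using 2
      · ext z
        simp [S, hx.1, hx.2, le_sub_iff_add_le]
      · ring_nf
    · simp [S, show ¬ (a ≤ x ∧ x ≤ b) from hx]
  calc P {ω | X ω ∈ Icc a b ∧ Z ω + ρ * X ω ∈ Icc c d}
      = P.map (fun ω => (X ω, Z ω)) S :=
        (Measure.map_apply_of_aemeasurable (hX.aemeasurable.prodMk hZ.aemeasurable) hS).symm
    _ = ∫⁻ x, P.map Z (Prod.mk x ⁻¹' S) ∂P.map X := by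
        have := Measure.isProbabilityMeasure_map (μ := P) hZ.aemeasurable
        rw [(indepFun_iff_map_prod_eq_prod_map_map hX.aemeasurable hZ.aemeasurable).1 hXZ,
          Measure.prod_apply hS]
    _ ≤ ENNReal.ofReal ((d - c) / √Var[Z; P]) * P.map X (Icc a b) := by
        refine (lintegral_mono hslice).trans_eq ?_
        rw [lintegral_indicator measurableSet_Icc, setLIntegral_const]
    _ ≤ ENNReal.ofReal ((d - c) / √Var[Z; P]) * ENNReal.ofReal ((b - a) / √Var[X; P]) := by
        gcongr
        exact map_Icc_le_of_hasGaussianLaw hX hX_var a b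
    _ = ENNReal.ofReal ((b - a) * (d - c) / (√Var[X; P] * √Var[Z; P])) := by
        rw [mul_comm, ← ENNReal.ofReal_mul (div_nonneg (sub_nonneg.2 hab) (by positivity)),
          div_mul_div_comm]

lemma measure_mem_Icc_and_mem_Icc_le {X Y : Ω → ℝ}
    (hXY : HasGaussianLaw (fun ω => (X ω, Y ω)) P)
    (hdet : 0 < Var[X; P] * Var[Y; P] - cov[X, Y; P] ^ 2) {a b : ℝ} (hab : a ≤ b)
    (c d : ℝ) :
    P {ω | X ω ∈ Icc a b ∧ Y ω ∈ Icc c d} ≤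
      ENNReal.ofReal ((b - a) * (d - c) / √(Var[X; P] * Var[Y; P] - cov[X, Y; P] ^ 2)) := by
  have := hXY.isProbabilityMeasure
  have hX_var : 0 < Var[X; P] := pos_of_mul_pos_left
    (by linarith [sq_nonneg cov[X, Y; P]] : 0 < Var[X; P] * Var[Y; P]) (variance_nonneg Y P)
  set ρ := cov[X, Y; P] / Var[X; P] with hρ
  set Z : Ω → ℝ := fun ω => Y ω - ρ * X ω
  have hX := hXY.fst.memLp_two
  have hY := hXY.snd.memLp_two
  have hρX : MemLp (fun ω => ρ * X ω) 2 P := hX.const_mul ρ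
  have hXZ : HasGaussianLaw (fun ω => (X ω, Z ω)) P := hXY.map_fun
    ((ContinuousLinearMap.fst ℝ ℝ ℝ).prod
      (ContinuousLinearMap.snd ℝ ℝ ℝ - ρ • ContinuousLinearMap.fst ℝ ℝ ℝ))
  have hindep : IndepFun X Z P := hXZ.indepFun_of_covariance_eq_zero <| by
    rw [covariance_fun_sub_right hX hY hρX, covariance_const_mul_right,
      covariance_self hXY.fst.aemeasurable, hρ, div_mul_cancel₀ _ hX_var.ne', sub_self]
  have hZ_var : Var[X; P] * Var[Z; P] = Var[X; P] * Var[Y; P] - cov[X, Y; P] ^ 2 := by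
    rw [variance_fun_sub hY hρX, covariance_const_mul_right, variance_const_mul, covariance_comm,
      hρ]
    field_simp
    ring
  have hZ_pos : 0 < Var[Z; P] := pos_of_mul_pos_right (hZ_var ▸ hdet) hX_var.le
  have hY_eq (ω : Ω) : Z ω + ρ * X ω = Y ω := sub_add_cancel _ _
  simpa only [hY_eq, ← sqrt_mul hX_var.le, hZ_var] using
    measure_mem_Icc_and_add_mul_mem_Icc_le_of_indepFun hindep hXZ.fst hXZ.snd hX_var hZ_pos ρ
      hab c d

lemma lintegral_enorm_le_sqrt_variance [IsProbabilityMeasure P] {X : Ω → ℝ} (hX : MemLp X 2 P)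
    (hX_mean : P[X] = 0) : ∫⁻ ω, ‖X ω‖ₑ ∂P ≤ ENNReal.ofReal √Var[X; P] := by
  calc ∫⁻ ω, ‖X ω‖ₑ ∂P = eLpNorm X 1 P := eLpNorm_one_eq_lintegral_enorm.symm
    _ ≤ eLpNorm X 2 P := eLpNorm_le_eLpNorm_of_exponent_le one_le_two hX.1
    _ = ENNReal.ofReal √Var[X; P] := by
        rw [variance_of_integral_eq_zero hX.aemeasurable hX_mean,
          hX.eLpNorm_eq_integral_rpow_norm two_ne_zero ENNReal.ofNat_ne_top, sqrt_eq_rpow]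
        simp

lemma isGaussianProcess_of_isGaussian_map_sum {ι : Type*} {X : ι → Ω → ℝ}
    (h : ∀ (m : ℕ) (c : Fin m → ℝ) (x : Fin m → ι),
      IsGaussian (P.map fun ω => ∑ i, c i * X (x i) ω)) :
    IsGaussianProcess X P where
  hasGaussianLaw I := by
    classical
    have hX (i : ι) : AEMeasurable (X i) P := by
      have := (h 1 1 fun _ => i).toIsProbabilityMeasure
      simpa using aemeasurable_of_map_neZero (f := fun ω => ∑ k : Fin 1, 1 * X i ω) (μ := P)
        (by simpa using NeZero.mk this.ne_zero)
    have hXI : AEMeasurable (fun ω => I.restrict (X · ω)) P :=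
      aemeasurable_pi_iff.2 fun i => hX i
    refine ⟨isGaussian_of_isGaussian_map fun L => ?_⟩
    rw [AEMeasurable.map_map_of_aemeasurable (by fun_prop) hXI]
    convert h I.card (fun k => L (Pi.single (I.equivFin.symm k) 1)) (fun k => I.equivFin.symm k)
      using 2
    ext ω
    rw [Equiv.sum_comp I.equivFin.symm (fun i => L (Pi.single i 1) * X i ω), Function.comp_apply,
      pi_eq_sum_univ' (I.restrict (X · ω)), map_sum]
    simp [mul_comm]

end GaussianLaws

/-- `X` is a Gaussian process with mean zero and covariance kernel `K`. -/
structure IsCenteredGaussianProcess {ι Ω : Type*} [MeasurableSpace Ω] (X : ι → Ω → ℝ)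
    (K : ι → ι → ℝ) (P : Measure Ω) : Prop extends IsGaussianProcess X P where
  integral_eq_zero : ∀ s, P[X s] = 0
  covariance_eq : ∀ s t, cov[X s, X t; P] = K s t

section CenteredGaussianProcesses

variable {ι Ω : Type*} [MeasurableSpace Ω] {P : Measure Ω} {X : ι → Ω → ℝ} {K : ι → ι → ℝ}

lemma isCenteredGaussianProcess_of_map_sum_eq_gaussianReal (hK_symm : ∀ s t, K s t = K t s)
    (hK_nonneg : ∀ (m : ℕ) (c : Fin m → ℝ) (x : Fin m → ι),
      0 ≤ ∑ i, ∑ j, c i * c j * K (x i) (x j))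
    (h : ∀ (m : ℕ) (c : Fin m → ℝ) (x : Fin m → ι), P.map (fun ω => ∑ i, c i * X (x i) ω) =
      gaussianReal 0 (∑ i, ∑ j, c i * c j * K (x i) (x j)).toNNReal) :
    IsCenteredGaussianProcess X K P := by
  have hX : IsGaussianProcess X P := isGaussianProcess_of_isGaussian_map_sum fun m c x => by
    rw [h]
    infer_instance
  have := hX.isProbabilityMeasure
  have hlaw {m : ℕ} (c : Fin m → ℝ) (x : Fin m → ι) : HasLaw (fun ω => ∑ i, c i * X (x i) ω)
      (gaussianReal 0 (∑ i, ∑ j, c i * c j * K (x i) (x j)).toNNReal) P :=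
    ⟨Finset.aemeasurable_fun_sum _ fun i _ => (hX.aemeasurable _).const_mul _, h m c x⟩
  have hvar {m : ℕ} (c : Fin m → ℝ) (x : Fin m → ι) :
      Var[fun ω => ∑ i, c i * X (x i) ω; P] = ∑ i, ∑ j, c i * c j * K (x i) (x j) := by
    rw [(hlaw c x).variance_eq, variance_id_gaussianReal, coe_toNNReal _ (hK_nonneg m c x)]
  have hvar_eval (s : ι) : Var[X s; P] = K s s := by simpa using hvar ![1] ![s]
  refine ⟨hX, fun s => ?_, fun s t => ?_⟩
  · simpa using (hlaw ![1] ![s]).integral_eq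
  · have hadd := variance_fun_add (hX.hasGaussianLaw_eval s).memLp_two
      (hX.hasGaussianLaw_eval t).memLp_two
    have hsum := hvar ![1, 1] ![s, t]
    simp only [Fin.sum_univ_two, Matrix.cons_val_zero, Matrix.cons_val_one, one_mul,
      hK_symm t s] at hsum
    linarith [hvar_eval s, hvar_eval t]

namespace IsCenteredGaussianProcess

lemma memLp_two (hX : IsCenteredGaussianProcess X K P) (s : ι) : MemLp (X s) 2 P :=
  (hX.hasGaussianLaw_eval s).memLp_two

lemma variance_sum_mul (hX : IsCenteredGaussianProcess X K P) {m : ℕ} (c : Fin m → ℝ)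
    (x : Fin m → ι) :
    Var[fun ω => ∑ i, c i * X (x i) ω; P] = ∑ i, ∑ j, c i * c j * K (x i) (x j) := by
  have := hX.isProbabilityMeasure
  rw [variance_fun_sum fun i => (hX.memLp_two (x i)).const_mul (c i)]
  simp only [covariance_const_mul_left, covariance_const_mul_right, hX.covariance_eq]
  exact Finset.sum_congr rfl fun i _ => Finset.sum_congr rfl fun j _ => by ring

lemma lintegral_enorm_sum_mul_le (hX : IsCenteredGaussianProcess X K P) {m : ℕ} (c : Fin m → ℝ)
    (x : Fin m → ι) :
    ∫⁻ ω, ‖∑ i, c i * X (x i) ω‖ₑ ∂P ≤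
      ENNReal.ofReal √(∑ i, ∑ j, c i * c j * K (x i) (x j)) := by
  have := hX.isProbabilityMeasure
  rw [← hX.variance_sum_mul]
  refine lintegral_enorm_le_sqrt_variance
    (memLp_finsetSum _ fun i _ => (hX.memLp_two (x i)).const_mul (c i)) ?_
  rw [integral_finsetSum _ fun i _ => ((hX.memLp_two (x i)).integrable one_le_two).const_mul (c i)]
  simp [integral_const_mul, hX.integral_eq_zero]

lemma measure_abs_le_and_abs_le_le (hX : IsCenteredGaussianProcess X K P) {s t : ι}
    (hdet : 0 < K s s * K t t - K s t ^ 2) {r : ℝ} (hr : 0 ≤ r) :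
    P {ω | |X s ω| ≤ r ∧ |X t ω| ≤ r} ≤
      ENNReal.ofReal (4 * r ^ 2 / √(K s s * K t t - K s t ^ 2)) := by
  have hvar (u : ι) : Var[X u; P] = K u u := by
    rw [← covariance_self (hX.aemeasurable u), hX.covariance_eq]
  have hbox := measure_mem_Icc_and_mem_Icc_le (hX.hasGaussianLaw_prodMk (s := s) (t := t))
    (by simpa only [hvar, hX.covariance_eq] using hdet) (neg_le_self hr) (-r) r
  simp only [hvar, hX.covariance_eq, mem_Icc, ← abs_le] at hbox
  convert hbox using 3
  ring

end IsCenteredGaussianProcess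

end CenteredGaussianProcesses

section ExpKernel

/-- The covariance kernel of the process: the Gram kernel of the exponentials `t ↦ exp (x * t)`
in `L²([0, 1])`. -/
noncomputable def expKernel (x y : ℝ) : ℝ :=
  ∫ t in (0 : ℝ)..1, rexp ((x + y) * t)

lemma expKernel_comm (x y : ℝ) : expKernel x y = expKernel y x := by
  rw [expKernel, add_comm, expKernel]

lemma sum_sum_mul_expKernel {m : ℕ} (c x : Fin m → ℝ) :
    ∑ i, ∑ j, c i * c j * expKernel (x i) (x j) =
      ∫ t in (0 : ℝ)..1, (∑ i, c i * rexp (x i * t)) ^ 2 := by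
  have hsq (t : ℝ) : (∑ i, c i * rexp (x i * t)) ^ 2 =
      ∑ i, ∑ j, c i * c j * rexp ((x i + x j) * t) := by
    rw [sq, Finset.sum_mul_sum]
    refine Finset.sum_congr rfl fun i _ => Finset.sum_congr rfl fun j _ => ?_
    rw [add_mul, exp_add]
    ring
  simp only [hsq, expKernel]
  rw [intervalIntegral.integral_finsetSum
    fun i _ => Continuous.intervalIntegrable (by fun_prop) _ _]
  refine Finset.sum_congr rfl fun i _ => ?_
  rw [intervalIntegral.integral_finsetSum
    fun j _ => Continuous.intervalIntegrable (by fun_prop) _ _]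
  simp only [intervalIntegral.integral_const_mul]

lemma sum_sum_mul_expKernel_nonneg {m : ℕ} (c x : Fin m → ℝ) :
    0 ≤ ∑ i, ∑ j, c i * c j * expKernel (x i) (x j) := by
  rw [sum_sum_mul_expKernel]
  exact intervalIntegral.integral_nonneg zero_le_one fun t _ => sq_nonneg _

lemma integral_integral_sq_mul_sub_mul {u v : ℝ → ℝ} (hu : Continuous u) (hv : Continuous v)
    (a b : ℝ) :
    ∫ s in a..b, ∫ t in a..b, (u s * v t - u t * v s) ^ 2 =
      2 * ((∫ t in a..b, u t ^ 2) * (∫ t in a..b, v t ^ 2) - (∫ t in a..b, u t * v t) ^ 2) := by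
  have hint {f : ℝ → ℝ} (hf : Continuous f) : IntervalIntegrable f volume a b :=
    hf.intervalIntegrable a b
  have hinner (s : ℝ) : ∫ t in a..b, (u s * v t - u t * v s) ^ 2 =
      u s ^ 2 * (∫ t in a..b, v t ^ 2) - 2 * (u s * v s) * (∫ t in a..b, u t * v t) +
        v s ^ 2 * ∫ t in a..b, u t ^ 2 := by
    have hexpand (t : ℝ) : (u s * v t - u t * v s) ^ 2 =
        u s ^ 2 * v t ^ 2 - 2 * (u s * v s) * (u t * v t) + v s ^ 2 * u t ^ 2 := by ring
    simp only [hexpand]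
    rw [intervalIntegral.integral_add (hint (by fun_prop)) (hint (by fun_prop)),
      intervalIntegral.integral_sub (hint (by fun_prop)) (hint (by fun_prop))]
    simp only [intervalIntegral.integral_const_mul]
  simp only [hinner]
  rw [intervalIntegral.integral_add (hint (by fun_prop)) (hint (by fun_prop)),
    intervalIntegral.integral_sub (hint (by fun_prop)) (hint (by fun_prop))]
  simp only [intervalIntegral.integral_const_mul, intervalIntegral.integral_mul_const]
  ring

lemma sq_exp_neg_mul_sub_le_sq_exp_sub_exp {R p q : ℝ} (hp : -R ≤ p) (hq : -R ≤ q) :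
    (rexp (-R) * (p - q)) ^ 2 ≤ (rexp p - rexp q) ^ 2 := by
  wlog hqp : q ≤ p generalizing p q
  · rw [← neg_sub q p, ← neg_sub (rexp q), mul_neg, neg_sq, neg_sq]
    exact this hq hp (le_of_not_ge hqp)
  have hpq : 0 ≤ p - q := sub_nonneg.2 hqp
  have hle : rexp (-R) * (p - q) ≤ rexp p - rexp q :=
    calc rexp (-R) * (p - q) ≤ rexp q * (rexp (p - q) - 1) :=
          mul_le_mul (exp_le_exp.2 hq) (le_sub_iff_add_le.2 (add_one_le_exp _)) hpq (exp_pos _).le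
      _ = rexp p - rexp q := by rw [mul_sub, ← exp_add, add_sub_cancel, mul_one]
  gcongr

lemma integral_integral_sq_sub : ∫ s in (0 : ℝ)..1, ∫ t in (0 : ℝ)..1, (s - t) ^ 2 = 1 / 6 := by
  have hinner (s : ℝ) : ∫ t in (0 : ℝ)..1, (s - t) ^ 2 = (s ^ 3 - (s - 1) ^ 3) / 3 := by
    rw [intervalIntegral.integral_comp_sub_left (fun t => t ^ 2), integral_pow]
    norm_num
  simp only [hinner]
  rw [intervalIntegral.integral_div, intervalIntegral.integral_sub
    (Continuous.intervalIntegrable (by fun_prop) _ _)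
    (Continuous.intervalIntegrable (by fun_prop) _ _), integral_pow,
    intervalIntegral.integral_comp_sub_right (fun t => t ^ 3), integral_pow]
  norm_num

lemma expKernel_gram_det_ge {M x y : ℝ} (hx : x ∈ Icc (-M) M) (hy : y ∈ Icc (-M) M) :
    (rexp (-(2 * M)) * (y - x)) ^ 2 / 12 ≤
      expKernel x x * expKernel y y - expKernel x y ^ 2 := by
  have hpoint (s : ℝ) (hs : s ∈ Icc (0 : ℝ) 1) (t : ℝ) (ht : t ∈ Icc (0 : ℝ) 1) :
      (rexp (-(2 * M)) * (y - x)) ^ 2 * (s - t) ^ 2 ≤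
        (rexp (x * s) * rexp (y * t) - rexp (x * t) * rexp (y * s)) ^ 2 := by
    have hlow {z r : ℝ} (hz : z ∈ Icc (-M) M) (hr : r ∈ Icc (0 : ℝ) 1) : -M ≤ z * r := by
      nlinarith [hz.1, hz.2, hr.1, hr.2]
    rw [← exp_add, ← exp_add]
    refine le_trans (le_of_eq ?_) (sq_exp_neg_mul_sub_le_sq_exp_sub_exp (R := 2 * M)
      (by linarith [hlow hx hs, hlow hy ht]) (by linarith [hlow hx ht, hlow hy hs]))
    ring
  have hker (p q : ℝ) : expKernel p q = ∫ t in (0 : ℝ)..1, rexp (p * t) * rexp (q * t) := by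
    simp only [expKernel, add_mul, exp_add]
  have hlagrange := integral_integral_sq_mul_sub_mul (u := fun t => rexp (x * t))
    (v := fun t => rexp (y * t)) (by fun_prop) (by fun_prop) 0 1
  simp only [sq (rexp _), ← hker] at hlagrange
  have hmono : ∫ s in (0 : ℝ)..1, ∫ t in (0 : ℝ)..1,
        (rexp (-(2 * M)) * (y - x)) ^ 2 * (s - t) ^ 2 ≤
      ∫ s in (0 : ℝ)..1, ∫ t in (0 : ℝ)..1,
        (rexp (x * s) * rexp (y * t) - rexp (x * t) * rexp (y * s)) ^ 2 := by
    refine intervalIntegral.integral_mono_on zero_le_one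
      (Continuous.intervalIntegrable (by fun_prop) _ _)
      (Continuous.intervalIntegrable (by fun_prop) _ _) fun s hs =>
        intervalIntegral.integral_mono_on zero_le_one
          (Continuous.intervalIntegrable (by fun_prop) _ _)
          (Continuous.intervalIntegrable (by fun_prop) _ _) (hpoint s hs)
  simp only [intervalIntegral.integral_const_mul, integral_integral_sq_sub] at hmono
  linarith

lemma fwdDiff_iterate_exp_mul (h t x : ℝ) (n : ℕ) :
    (Δ_[h])^[n] (fun y => rexp (y * t)) x = (rexp (h * t) - 1) ^ n * rexp (x * t) := by
  induction n generalizing x with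
  | zero => simp
  | succ n ih =>
    rw [Function.iterate_succ_apply', fwdDiff, ih, ih, add_mul, exp_add]
    ring

lemma abs_fwdDiff_iterate_exp_mul_le {M h t x : ℝ} (hx : x ≤ M)
    (hh : h ∈ Icc 0 (2 * M)) (ht : t ∈ Icc (0 : ℝ) 1) (n : ℕ) :
    |(Δ_[h])^[n] (fun y => rexp (y * t)) x| ≤ rexp ((2 * n + 1) * M) * h ^ n := by
  have hh0 : 0 ≤ h := hh.1
  have hht0 : 0 ≤ h * t := mul_nonneg hh.1 ht.1
  have hht : h * t ≤ h := mul_le_of_le_one_right hh.1 ht.2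
  have hbase : rexp (h * t) - 1 ≤ rexp (2 * M) * h :=
    calc rexp (h * t) - 1 = rexp (h * t) * (1 - rexp (-(h * t))) := by
          rw [mul_sub, ← exp_add]
          simp
      _ ≤ rexp (2 * M) * h :=
          mul_le_mul (exp_le_exp.2 (hht.trans hh.2)) (by linarith [add_one_le_exp (-(h * t))])
            (sub_nonneg.2 (exp_le_one_iff.2 (neg_nonpos.2 hht0))) (exp_pos _).le
  have hbase0 : 0 ≤ rexp (h * t) - 1 := sub_nonneg.2 (one_le_exp hht0)
  have hM : 0 ≤ M := by linarith [hh.2]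
  have hxt : x * t ≤ M := by nlinarith [ht.1, ht.2]
  rw [fwdDiff_iterate_exp_mul, abs_of_nonneg (by positivity)]
  calc (rexp (h * t) - 1) ^ n * rexp (x * t) ≤ (rexp (2 * M) * h) ^ n * rexp M := by gcongr
    _ = rexp ((2 * n + 1) * M) * h ^ n := by
        rw [mul_pow, ← exp_nat_mul, mul_right_comm, ← exp_add]
        ring_nf

end ExpKernel

section ExpProcess

variable {Ω : Type*} [MeasurableSpace Ω] {P : Measure Ω} {g : Ω → ℝ → ℝ} {M : ℝ}

lemma measure_abs_le_and_abs_le_le_of_expKernel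
    (hg : IsCenteredGaussianProcess (fun x ω => g ω x) expKernel P) {x y r : ℝ}
    (hx : x ∈ Icc (-M) M) (hy : y ∈ Icc (-M) M) (hxy : x < y) (hr : 0 ≤ r) :
    P {ω | |g ω x| ≤ r ∧ |g ω y| ≤ r} ≤
      ENNReal.ofReal (16 * rexp (2 * M) * r ^ 2 / (y - x)) := by
  have hyx : 0 < y - x := sub_pos.2 hxy
  have hdet := expKernel_gram_det_ge hx hy
  have hsqrt : rexp (-(2 * M)) * (y - x) / 4 ≤
      √(expKernel x x * expKernel y y - expKernel x y ^ 2) := by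
    refine le_sqrt_of_sq_le (le_trans ?_ hdet)
    rw [div_pow]
    gcongr
    norm_num
  refine (hg.measure_abs_le_and_abs_le_le (hdet.trans_lt' (by positivity)) hr).trans ?_
  refine ENNReal.ofReal_le_ofReal ?_
  calc 4 * r ^ 2 / √(expKernel x x * expKernel y y - expKernel x y ^ 2)
      ≤ 4 * r ^ 2 / (rexp (-(2 * M)) * (y - x) / 4) := by gcongr
    _ = 16 * rexp (2 * M) * r ^ 2 / (y - x) := by
        rw [exp_neg]
        field_simp
        ring

lemma lintegral_enorm_fwdDiff_iterate_le_of_expKernel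
    (hg : IsCenteredGaussianProcess (fun x ω => g ω x) expKernel P) {x h : ℝ}
    (hx : x ≤ M) (hh : h ∈ Icc 0 (2 * M)) (n : ℕ) :
    ∫⁻ ω, ‖(Δ_[h])^[n] (g ω) x‖ₑ ∂P ≤ ENNReal.ofReal (rexp ((2 * n + 1) * M) * h ^ n) := by
  have hh0 : 0 ≤ h := hh.1
  simp only [fwdDiff_iterate_eq_sum_fin]
  refine (hg.lintegral_enorm_sum_mul_le _ _).trans (ENNReal.ofReal_le_ofReal ?_)
  rw [sum_sum_mul_expKernel, sqrt_le_left (by positivity)]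
  calc _ ≤ ∫ _ in (0 : ℝ)..1, (rexp ((2 * n + 1) * M) * h ^ n) ^ 2 := by
        refine intervalIntegral.integral_mono_on zero_le_one
          (Continuous.intervalIntegrable (by fun_prop) _ _)
          (Continuous.intervalIntegrable (by fun_prop) _ _) fun t ht => ?_
        rw [← fwdDiff_iterate_eq_sum_fin h x n fun y => rexp (y * t), ← sq_abs]
        gcongr
        exact abs_fwdDiff_iterate_exp_mul_le hx hh ht n
    _ = (rexp ((2 * n + 1) * M) * h ^ n) ^ 2 := by simp

lemma measure_exists_le_abs_iteratedDeriv_two_le_of_expKernel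
    (hg : IsCenteredGaussianProcess (fun x ω => g ω x) expKernel P)
    (hsmooth : ∀ᵐ ω ∂P, ContDiff ℝ 2 (g ω)) (hM : 0 < M) {T : ℝ} (hT : 0 < T) :
    P {ω | ∃ x ∈ Icc (-M) M, T ≤ |iteratedDeriv 2 (g ω) x|} ≤
      ENNReal.ofReal (rexp (7 * M) * (1 + 2 * M) / T) := by
  rw [two_mul, ← sub_neg_eq_add M M]
  refine measure_exists_le_abs_iteratedDeriv_le hg.aemeasurable hsmooth (by linarith)
    (exp_pos _).le (fun m hm x hx h hh => ?_) hT
  have hh0 : 0 ≤ h := hh.1.le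
  refine (lintegral_enorm_fwdDiff_iterate_le_of_expKernel hg hx.2
    ⟨hh0, by linarith [hh.2]⟩ m).trans ?_
  have hm3 : (m : ℝ) ≤ 3 := by exact_mod_cast hm.2
  gcongr
  linarith

end ExpProcess

theorem g_and_g_deriv_not_simultaneously_small_general
    {Ω : Type*} [MeasurableSpace Ω] {P : Measure Ω} {g : Ω → ℝ → ℝ}
    (hg : IsCenteredGaussianProcess (fun x ω => g ω x) expKernel P)
    (hsmooth : ∀ᵐ ω ∂P, ContDiff ℝ 2 (g ω)) {M : ℝ} (hM : 0 < M) :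
    ∃ C > (0 : ℝ), ∀ ε : ℝ, 0 < ε → ε ≤ 1 →
      P {ω | ∃ x ∈ Icc (-M) M, |g ω x| ≤ ε ∧ |deriv (g ω) x| ≤ ε ^ ((1 : ℝ) / 4)} ≤
        ENNReal.ofReal (C * ε ^ ((1 : ℝ) / 2)) := by
  refine ⟨rexp (7 * M) * (1 + 2 * M) + 9 * (16 * rexp (2 * M)) * (2 * M + 1) ^ 2 / (2 * M),
    by positivity, fun ε hε hε1 => ?_⟩
  have hσ4 : (ε ^ ((1 : ℝ) / 4)) ^ 4 = ε := by
    rw [← rpow_mul_natCast hε.le]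
    norm_num
  have hσ2 : (ε ^ ((1 : ℝ) / 4)) ^ 2 = ε ^ ((1 : ℝ) / 2) := by
    rw [← rpow_mul_natCast hε.le]
    norm_num
  simpa only [hσ4, hσ2, sub_neg_eq_add, ← two_mul] using
    measure_exists_abs_le_pow_four_and_abs_deriv_le (σ := ε ^ ((1 : ℝ) / 4)) hsmooth
      (neg_lt_self hM) (by positivity)
      (fun x hx y hy hxy r hr => measure_abs_le_and_abs_le_le_of_expKernel hg hx hy hxy hr)
      (by positivity)
      (fun T hT => measure_exists_le_abs_iteratedDeriv_two_le_of_expKernel hg hsmooth hM hT)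
      (by positivity) (rpow_le_one hε.le hε1 (by norm_num))

/-- for the a.s. smooth mean-zero Gaussian process `g` with
covariance `E[g(x)g(y)] = ∫_0^1 e^((x+y)t) dt`, the probability that somewhere on
`[-M,M]` both `|g| ≤ ε` and `|g'| ≤ ε^(1/4)` is `O(ε^(1/8))` as `ε → 0`. -/
theorem g_and_g_deriv_not_simultaneously_small
    {Ω : Type*} [MeasurableSpace Ω] (P : Measure Ω) [IsProbabilityMeasure P]
    (g : Ω → ℝ → ℝ)
    (hsmooth : ∀ᵐ ω ∂P, ContDiff ℝ (⊤ : ℕ∞) (g ω))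
    (hgauss : ∀ (m : ℕ) (c : Fin m → ℝ) (x : Fin m → ℝ),
      P.map (fun ω => ∑ i, c i * g ω (x i)) =
        gaussianReal 0
          (∑ i, ∑ j, c i * c j *
            ∫ t in (0:ℝ)..1, Real.exp ((x i + x j) * t)).toNNReal)
    (M : ℝ) (hM : 0 < M) :
    ∃ C > (0:ℝ), ∃ ε₀ > (0:ℝ), ∀ ε : ℝ, 0 < ε → ε ≤ ε₀ →
      P {ω | ∃ x ∈ Set.Icc (-M) M,
          |g ω x| ≤ ε ∧ |deriv (g ω) x| ≤ ε ^ ((1:ℝ)/4)}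
        ≤ ENNReal.ofReal (C * ε ^ ((1:ℝ)/8)) := by
  have hg : IsCenteredGaussianProcess (fun x ω => g ω x) expKernel P :=
    isCenteredGaussianProcess_of_map_sum_eq_gaussianReal expKernel_comm
      (fun _ => sum_sum_mul_expKernel_nonneg) hgauss
  obtain ⟨C, hC, hbound⟩ := g_and_g_deriv_not_simultaneously_small_general hg
    (hsmooth.mono fun _ hω => contDiff_infty.1 hω 2) hM
  refine ⟨C, hC, 1, one_pos, fun ε hε hε1 => (hbound ε hε hε1).trans ?_⟩
  have hpow : ε ^ ((1 : ℝ) / 2) ≤ ε ^ ((1 : ℝ) / 8) :=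
    rpow_le_rpow_of_exponent_ge hε hε1 (by norm_num)
  gcongr
end

section
/- Let X and Y be independent nonnegative-integer-valued random variables such that X + Y has a Poisson distribution. If X is not Poisson distributed (and not almost surely constant), then this yields a contradiction; equivalently, if X is not a (possibly shifted) Poisson variable then X + Y is not Poisson. Consequently: if ν and ν̃ are independent point processes and there is an interval I such that ν(I) is not Poisson distributed, then (ν + ν̃)(I) is not Poisson distributed. -/
open MeasureTheory ProbabilityTheory
open scoped NNReal

/-!
Write `G` for the probability generating function of `X`. If `X + Y` is Poisson of rate `r`, then
`P (Y = 0) * P (X = n) ≤ P (X + Y = n)` with `P (Y = 0) ≠ 0`, so `G` is entire and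
`‖G z‖ ≤ C * exp (r * ‖z‖)`. The product of the generating functions of `X` and `Y` is
`exp (r * (z - 1))`, so `G` has no zeros and is the exponential of an entire function whose real
part grows at most linearly. By Borel–Carathéodory and Liouville that function is affine, hence
`G z = G 0 * exp (s * z)` with `s = P (X = 1) / P (X = 0)`, and `G 1 = 1` makes this the generating
function of the Poisson law of rate `s`.
-/

open Complex Metric
open scoped ENNReal

section EntireFunctions

theorem eq_add_smul_deriv_of_norm_le_linear {F : Type*} [NormedAddCommGroup F] [NormedSpace ℂ F]
    [CompleteSpace F] {f : ℂ → F} (hf : Differentiable ℂ f) {A B : ℝ}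
    (hbound : ∀ z, ‖f z‖ ≤ A + B * ‖z‖) (z : ℂ) : f z = f 0 + z • deriv f 0 := by
  have norm_deriv_le (c : ℂ) : ‖deriv f c‖ ≤ |A| + 2 * |B| := by
    have norm_le_on_sphere : ∀ w ∈ sphere c (1 + ‖c‖), ‖f w‖ ≤ |A| + |B| * (1 + 2 * ‖c‖) := by
      intro w hw
      have norm_w_le : ‖w‖ ≤ 1 + 2 * ‖c‖ := by
        linarith [norm_le_norm_add_norm_sub' w c, mem_sphere_iff_norm.mp hw]
      calc ‖f w‖ ≤ A + B * ‖w‖ := hbound w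
        _ ≤ |A| + |B| * (1 + 2 * ‖c‖) := by gcongr <;> exact le_abs_self _
    have hR : 0 < 1 + ‖c‖ := by positivity
    calc ‖deriv f c‖ ≤ (|A| + |B| * (1 + 2 * ‖c‖)) / (1 + ‖c‖) :=
          norm_deriv_le_of_forall_mem_sphere_norm_le hR hf.diffContOnCl norm_le_on_sphere
      _ ≤ |A| + 2 * |B| := by
          rw [div_le_iff₀ hR]
          nlinarith [mul_nonneg (abs_nonneg A) (norm_nonneg c), abs_nonneg B]
  have deriv_const (w : ℂ) : deriv f w = deriv f 0 :=
    (hf.contDiff (n := 2)).differentiable_deriv_two.apply_eq_apply_of_bounded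
      (isBounded_iff_forall_norm_le.mpr ⟨_, Set.forall_mem_range.mpr norm_deriv_le⟩) w 0
  have hasDerivAt_sub (w : ℂ) : HasDerivAt (fun w ↦ f w - w • deriv f 0) 0 w := by
    simpa [deriv_const w] using! (hf w).hasDerivAt.sub ((hasDerivAt_id w).smul_const (deriv f 0))
  have sub_const := is_const_of_deriv_eq_zero (fun w ↦ (hasDerivAt_sub w).differentiableAt)
    (fun w ↦ (hasDerivAt_sub w).deriv) z 0
  rwa [zero_smul, sub_zero, sub_eq_iff_eq_add] at sub_const

theorem exists_norm_le_linear_of_re_le_linear {f : ℂ → ℂ} (hf : Differentiable ℂ f) {A B : ℝ}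
    (hre : ∀ z, (f z).re ≤ A + B * ‖z‖) : ∃ A' B' : ℝ, ∀ z, ‖f z‖ ≤ A' + B' * ‖z‖ := by
  refine ⟨2 * (|A| + 1 + |B|) + 3 * ‖f 0‖, 4 * |B|, fun z ↦ ?_⟩
  set R : ℝ := 2 * ‖z‖ + 1 with hR
  set M : ℝ := |A| + 1 + |B| * R with hM
  have re_le_on_ball : Set.MapsTo f (ball 0 R) {w | w.re ≤ M} := by
    intro w hw
    have norm_w_le : ‖w‖ ≤ R := (mem_ball_zero_iff.mp hw).le
    calc (f w).re ≤ A + B * ‖w‖ := hre w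
      _ ≤ |A| + |B| * R := by gcongr <;> exact le_abs_self _
      _ ≤ M := by linarith
  have z_mem_ball : z ∈ ball 0 R := by
    rw [mem_ball_zero_iff]
    linarith [norm_nonneg z]
  have sub_norm_eq : R - ‖z‖ = ‖z‖ + 1 := by ring
  have norm_div_le_one : ‖z‖ / (‖z‖ + 1) ≤ 1 := div_le_one_of_le₀ (by linarith) (by positivity)
  have add_norm_div_le_three : (R + ‖z‖) / (‖z‖ + 1) ≤ 3 := by
    rw [div_le_iff₀ (by positivity)]
    linarith
  calc ‖f z‖ ≤ 2 * M * ‖z‖ / (R - ‖z‖) + ‖f 0‖ * (R + ‖z‖) / (R - ‖z‖) :=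
        borelCaratheodory (by positivity) hf.differentiableOn re_le_on_ball (by positivity)
          z_mem_ball
    _ = 2 * M * (‖z‖ / (‖z‖ + 1)) + ‖f 0‖ * ((R + ‖z‖) / (‖z‖ + 1)) := by
        rw [sub_norm_eq, mul_div_assoc, mul_div_assoc]
    _ ≤ 2 * M * 1 + ‖f 0‖ * 3 := by gcongr
    _ = 2 * (|A| + 1 + |B|) + 3 * ‖f 0‖ + 4 * |B| * ‖z‖ := by rw [hM, hR]; ring

theorem exists_differentiable_exp_eq_of_forall_ne_zero {f : ℂ → ℂ} (hf : Differentiable ℂ f)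
    (hne : ∀ z, f z ≠ 0) : ∃ g : ℂ → ℂ, Differentiable ℂ g ∧ ∀ z, f z = exp (g z) := by
  have differentiable_logDeriv : Differentiable ℂ (logDeriv f) :=
    (hf.contDiff (n := 2)).differentiable_deriv_two.div hf hne
  obtain ⟨g, hg0, hg⟩ := differentiable_logDeriv.isExactOn_univ.with_val_at 0 (log (f 0))
  replace hg (z : ℂ) : HasDerivAt g (logDeriv f z) z := hg z (Set.mem_univ z)
  have hasDerivAt_mul (z : ℂ) : HasDerivAt (fun w ↦ f w * exp (-g w)) 0 z := by
    convert! (hf z).hasDerivAt.mul (hg z).neg.cexp using 1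
    rw [logDeriv_apply]
    field [hne z]
  refine ⟨g, fun z ↦ (hg z).differentiableAt, fun z ↦ ?_⟩
  have mul_const : f z * exp (-g z) = f 0 * exp (-g 0) :=
    is_const_of_deriv_eq_zero (fun w ↦ (hasDerivAt_mul w).differentiableAt)
      (fun w ↦ (hasDerivAt_mul w).deriv) z 0
  rwa [hg0, exp_neg, exp_neg, exp_log (hne 0), mul_inv_cancel₀ (hne 0),
    mul_inv_eq_one₀ (exp_ne_zero _)] at mul_const

/-- The case of Hadamard's factorization theorem of order at most one without zeros. -/
theorem eq_mul_exp_logDeriv_mul_of_norm_le_exp {f : ℂ → ℂ} (hf : Differentiable ℂ f)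
    (hne : ∀ z, f z ≠ 0) {A B : ℝ} (hbound : ∀ z, ‖f z‖ ≤ Real.exp (A + B * ‖z‖)) (z : ℂ) :
    f z = f 0 * exp (logDeriv f 0 * z) := by
  obtain ⟨g, hg, hfg⟩ := exists_differentiable_exp_eq_of_forall_ne_zero hf hne
  have re_le (w : ℂ) : (g w).re ≤ A + B * ‖w‖ := by
    rw [← Real.exp_le_exp, ← norm_exp, ← hfg]
    exact hbound w
  obtain ⟨A', B', norm_le⟩ := exists_norm_le_linear_of_re_le_linear hg re_le
  have logDeriv_eq : logDeriv f 0 = deriv g 0 := by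
    rw [funext hfg, logDeriv_apply, (hg 0).hasDerivAt.cexp.deriv,
      mul_div_cancel_left₀ _ (exp_ne_zero _)]
  rw [logDeriv_eq, hfg z, hfg 0, ← exp_add, eq_add_smul_deriv_of_norm_le_linear hg norm_le z,
    smul_eq_mul, mul_comm z]

end EntireFunctions

section Convolution

variable {M : Type*} [MeasurableSpace M]

theorem singleton_zero_smul_le_conv [AddMonoid M] [MeasurableAdd₂ M] (μ ν : Measure M)
    [SFinite ν] : ν {0} • μ ≤ μ ∗ ν := by
  refine Measure.le_intro fun S hS _ ↦ ?_
  calc (ν {0} • μ) S = (μ.prod ν) (S ×ˢ {0}) := by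
        rw [Measure.prod_prod, Measure.smul_apply, smul_eq_mul, mul_comm]
    _ ≤ (μ.prod ν) ((fun x : M × M ↦ x.1 + x.2) ⁻¹' S) := by
        refine measure_mono ?_
        rintro ⟨x, _⟩ ⟨hx, rfl⟩
        simpa using hx
    _ = (μ ∗ ν) S := (Measure.map_apply measurable_add hS).symm

theorem le_inv_smul_conv [AddMonoid M] [MeasurableAdd₂ M] (μ : Measure M) {ν : Measure M}
    [IsFiniteMeasure ν] (hν : ν {0} ≠ 0) : μ ≤ (ν {0})⁻¹ • (μ ∗ ν) :=
  calc μ = (ν {0})⁻¹ • ν {0} • μ := by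
        rw [smul_smul, ENNReal.inv_mul_cancel hν (measure_ne_top ν {0}), one_smul]
    _ ≤ (ν {0})⁻¹ • (μ ∗ ν) := by
        gcongr
        exact singleton_zero_smul_le_conv μ ν

theorem conv_singleton_zero [AddCommMonoid M] [Subsingleton (AddUnits M)] [MeasurableAdd₂ M]
    [MeasurableSingletonClass M] (μ ν : Measure M) [SFinite ν] :
    (μ ∗ ν) {0} = μ {0} * ν {0} := by
  have preimage_eq : (fun x : M × M ↦ x.1 + x.2) ⁻¹' {0} = {0} ×ˢ {0} := by
    ext x
    simp [Prod.ext_iff]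
  rw [Measure.conv, Measure.map_apply measurable_add (measurableSet_singleton 0), preimage_eq,
    Measure.prod_prod]

end Convolution

/-- The probability generating function `z ↦ E[z ^ n]` of a law `μ` on `ℕ`, for complex arguments.
It takes the junk value `0` where `n ↦ z ^ n` is not `μ`-integrable. -/
noncomputable def pgf (μ : Measure ℕ) (z : ℂ) : ℂ := ∫ n, z ^ n ∂μ

section GeneratingFunction

variable {μ ν : Measure ℕ}

theorem pgf_conv (μ ν : Measure ℕ) [SFinite μ] [SFinite ν] (z : ℂ) :
    pgf (μ ∗ ν) z = pgf μ z * pgf ν z := by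
  rw [pgf, Measure.conv, integral_map .of_discrete .of_discrete]
  simp_rw [pow_add]
  exact integral_prod_mul _ _

theorem pgf_one (μ : Measure ℕ) [IsProbabilityMeasure μ] : pgf μ 1 = 1 := by
  simp [pgf]

theorem hasSum_pgf {z : ℂ} (hz : Integrable (fun n ↦ z ^ n) μ) :
    HasSum (fun n ↦ μ.real {n} * z ^ n) (pgf μ z) := by
  rw [← μ.sum_smul_dirac] at hz
  simpa [pgf, measureReal_def, μ.sum_smul_dirac] using hasSum_integral_measure hz

theorem hasFPowerSeriesOnBall_pgf {R : ℝ≥0∞} (hR : 0 < R)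
    (hμ : ∀ z ∈ eball (0 : ℂ) R, Integrable (fun n ↦ z ^ n) μ) :
    HasFPowerSeriesOnBall (pgf μ) (.ofScalars ℂ fun n ↦ (μ.real {n} : ℂ)) 0 R where
  r_le := by
    refine ENNReal.le_of_forall_nnreal_lt fun ρ hρ ↦
      FormalMultilinearSeries.le_radius_of_summable_norm _ ?_
    have integrable_pow : Integrable (fun n ↦ ((ρ : ℝ) : ℂ) ^ n) μ :=
      hμ _ (by simpa [enorm_eq_nnnorm] using hρ)
    simpa [FormalMultilinearSeries.ofScalars_norm] using (hasSum_pgf integrable_pow).summable.norm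
  r_pos := hR
  hasSum {z} hz := by
    simpa [FormalMultilinearSeries.ofScalars_apply_eq, mul_comm] using hasSum_pgf (hμ z hz)

theorem hasFPowerSeriesAt_pgf (μ : Measure ℕ) [IsFiniteMeasure μ] :
    HasFPowerSeriesAt (pgf μ) (.ofScalars ℂ fun n ↦ (μ.real {n} : ℂ)) 0 := by
  refine (hasFPowerSeriesOnBall_pgf one_pos fun z hz ↦ ?_).hasFPowerSeriesAt
  have norm_le_one : ‖z‖ ≤ 1 := by
    simpa [enorm_eq_nnnorm, ← NNReal.coe_le_one] using (mem_eball_zero_iff.mp hz).le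
  refine .of_bound .of_discrete 1 (.of_forall fun n ↦ ?_)
  rw [norm_pow]
  exact pow_le_one₀ (norm_nonneg z) norm_le_one

theorem differentiable_pgf (hμ : ∀ z : ℂ, Integrable (fun n ↦ z ^ n) μ) :
    Differentiable ℂ (pgf μ) := by
  simpa [differentiableOn_univ] using
    (hasFPowerSeriesOnBall_pgf ENNReal.zero_lt_top fun z _ ↦ hμ z).differentiableOn

theorem pgf_zero (μ : Measure ℕ) [IsFiniteMeasure μ] : pgf μ 0 = μ.real {0} := by
  simpa using ((hasFPowerSeriesAt_pgf μ).coeff_zero (fun _ ↦ 0)).symm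

theorem logDeriv_pgf_zero (μ : Measure ℕ) [IsFiniteMeasure μ] :
    logDeriv (pgf μ) 0 = (μ.real {1} / μ.real {0} : ℝ) := by
  rw [logDeriv_apply, (hasFPowerSeriesAt_pgf μ).deriv, pgf_zero]
  simp

theorem eq_of_pgf_eq [IsFiniteMeasure μ] [IsFiniteMeasure ν] (h : pgf μ = pgf ν) : μ = ν := by
  have series_eq := (hasFPowerSeriesAt_pgf μ).eq_formalMultilinearSeries
    (h ▸ hasFPowerSeriesAt_pgf ν)
  have coeff_eq := FormalMultilinearSeries.ofScalars_series_injective ℂ ℂ series_eq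
  exact ext_iff_measureReal_singleton.mpr fun n ↦ ofReal_injective (congrFun coeff_eq n)

theorem norm_pgf_le_of_le_smul {c : ℝ≥0∞} (hc : c ≠ ∞) (hle : μ ≤ c • ν) {z : ℂ}
    (hz : Integrable (fun n ↦ z ^ n) ν) : ‖pgf μ z‖ ≤ c.toReal * ‖pgf ν ‖z‖‖ := by
  have integrable_norm : Integrable (fun n ↦ ‖z‖ ^ n) (c • ν) := by
    simpa only [norm_pow] using (hz.smul_measure hc).norm
  calc ‖pgf μ z‖ ≤ ∫ n, ‖z‖ ^ n ∂μ := by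
        simpa only [norm_pow] using! norm_integral_le_integral_norm (μ := μ) fun n ↦ z ^ n
    _ ≤ ∫ n, ‖z‖ ^ n ∂(c • ν) :=
        integral_mono_measure hle (.of_forall fun n ↦ by positivity) integrable_norm
    _ = c.toReal * ∫ n, ‖z‖ ^ n ∂ν := integral_smul_measure _ _
    _ ≤ c.toReal * ‖pgf ν ‖z‖‖ := by
        simp_rw [pgf, ← ofReal_pow, integral_complex_ofReal, norm_real]
        gcongr
        exact Real.le_norm_self _

end GeneratingFunction

section Poisson

theorem integrable_pow_poissonMeasure (r : ℝ≥0) (z : ℂ) :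
    Integrable (fun n ↦ z ^ n) (poissonMeasure r) := by
  rw [integrable_poissonMeasure_iff]
  refine ((Real.summable_pow_div_factorial (r * ‖z‖)).mul_left (Real.exp (-r))).congr fun n ↦ ?_
  rw [norm_pow]
  ring

theorem pgf_poissonMeasure (r : ℝ≥0) (z : ℂ) :
    pgf (poissonMeasure r) z = exp (r * (z - 1)) := by
  have hasSum_exp : HasSum (fun n : ℕ ↦ exp (-r) * ((r * z) ^ n / n.factorial))
      (exp (-r) * exp (r * z)) := by
    rw [exp_eq_exp_ℂ]
    exact (NormedSpace.expSeries_div_hasSum_exp (r * z : ℂ)).mul_left _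
  calc pgf (poissonMeasure r) z = exp (-r) * exp (r * z) := by
        refine (hasSum_pgf (integrable_pow_poissonMeasure r z)).unique ?_
        convert hasSum_exp using 2 with n
        rw [poissonMeasure_real_singleton]
        push_cast
        ring
    _ = exp (r * (z - 1)) := by rw [← exp_add]; ring_nf

variable {μ ν : Measure ℕ} {r : ℝ≥0}

theorem singleton_zero_ne_zero_of_conv_eq_poissonMeasure [SFinite ν]
    (h : μ ∗ ν = poissonMeasure r) : μ {0} ≠ 0 ∧ ν {0} ≠ 0 := by
  rw [← mul_ne_zero_iff, ← conv_singleton_zero, h, poissonMeasure_singleton]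
  simpa using Real.exp_pos _

theorem norm_pgf_le_exp_of_le_smul_poissonMeasure {c : ℝ≥0∞} (hc₀ : c ≠ 0) (hc : c ≠ ∞)
    (hle : μ ≤ c • poissonMeasure r) (z : ℂ) :
    ‖pgf μ z‖ ≤ Real.exp (Real.log c.toReal - r + r * ‖z‖) := by
  calc ‖pgf μ z‖ ≤ c.toReal * ‖pgf (poissonMeasure r) ‖z‖‖ :=
        norm_pgf_le_of_le_smul hc hle (integrable_pow_poissonMeasure r z)
    _ = Real.exp (Real.log c.toReal) * Real.exp (r * (‖z‖ - 1)) := by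
        rw [pgf_poissonMeasure, norm_exp, Real.exp_log (ENNReal.toReal_pos hc₀ hc)]
        simp
    _ = Real.exp (Real.log c.toReal - r + r * ‖z‖) := by rw [← Real.exp_add]; ring_nf

theorem pgf_eq_exp_of_conv_eq_poissonMeasure [IsProbabilityMeasure μ] [IsFiniteMeasure ν]
    (h : μ ∗ ν = poissonMeasure r) (z : ℂ) :
    pgf μ z = exp ((μ.real {1} / μ.real {0} : ℝ) * (z - 1)) := by
  have hν₀ : ν {0} ≠ 0 := (singleton_zero_ne_zero_of_conv_eq_poissonMeasure h).2
  have hc₀ : (ν {0})⁻¹ ≠ 0 := ENNReal.inv_ne_zero.mpr (measure_ne_top ν {0})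
  have hc : (ν {0})⁻¹ ≠ ∞ := ENNReal.inv_ne_top.mpr hν₀
  have μ_le : μ ≤ (ν {0})⁻¹ • poissonMeasure r := h ▸ le_inv_smul_conv μ hν₀
  have pgf_ne_zero (w : ℂ) : pgf μ w ≠ 0 := by
    refine left_ne_zero_of_mul (b := pgf ν w) ?_
    rw [← pgf_conv, h, pgf_poissonMeasure]
    exact exp_ne_zero _
  have pgf_eq (w : ℂ) : pgf μ w = pgf μ 0 * exp (logDeriv (pgf μ) 0 * w) :=
    eq_mul_exp_logDeriv_mul_of_norm_le_exp
      (differentiable_pgf fun w ↦ (integrable_pow_poissonMeasure r w).of_measure_le_smul hc μ_le)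
      pgf_ne_zero (norm_pgf_le_exp_of_le_smul_poissonMeasure hc₀ hc μ_le) w
  have pgf_zero_mul_exp : pgf μ 0 * exp (logDeriv (pgf μ) 0) = 1 := by
    simpa only [pgf_one, mul_one] using (pgf_eq 1).symm
  rw [← logDeriv_pgf_zero, mul_sub, mul_one, exp_sub, eq_div_iff (exp_ne_zero _), pgf_eq z,
    mul_right_comm, pgf_zero_mul_exp, one_mul]

theorem exists_eq_poissonMeasure_of_conv_eq_poissonMeasure [IsProbabilityMeasure μ]
    [IsFiniteMeasure ν] (h : μ ∗ ν = poissonMeasure r) : ∃ s : ℝ≥0, μ = poissonMeasure s := by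
  refine ⟨(μ.real {1} / μ.real {0}).toNNReal, eq_of_pgf_eq (funext fun z ↦ ?_)⟩
  rw [pgf_eq_exp_of_conv_eq_poissonMeasure h, pgf_poissonMeasure,
    Real.coe_toNNReal _ (by positivity)]

end Poisson

theorem raikov_consequence_general {Ω : Type*} [MeasurableSpace Ω] {P : Measure Ω}
    [IsProbabilityMeasure P] {X Y : Ω → ℕ} (hX : AEMeasurable X P) (hY : AEMeasurable Y P)
    (hindep : IndepFun X Y P) (hnotPoisson : ∀ s : ℝ≥0, P.map X ≠ poissonMeasure s) (r : ℝ≥0) :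
    P.map (fun ω ↦ X ω + Y ω) ≠ poissonMeasure r := by
  intro hsum
  have := Measure.isProbabilityMeasure_map hX
  have conv_eq : P.map X ∗ P.map Y = poissonMeasure r :=
    (hindep.map_add_eq_map_conv_map₀ hX hY).symm.trans hsum
  obtain ⟨s, hs⟩ := exists_eq_poissonMeasure_of_conv_eq_poissonMeasure conv_eq
  exact hnotPoisson s hs

/-- consequence of Raikov's theorem: if `X` and `Y` are
independent `ℕ`-valued random variables and the law of `X` is not that of a
(possibly shifted, possibly degenerate) Poisson variable, then `X + Y` is not
Poisson distributed. -/
theorem raikov_consequence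
    {Ω : Type*} [MeasurableSpace Ω] (P : Measure Ω) [IsProbabilityMeasure P]
    (X Y : Ω → ℕ) (hX : Measurable X) (hY : Measurable Y)
    (hindep : IndepFun X Y P)
    (hnotPoisson : ∀ (r : ℝ≥0) (c : ℕ),
      P.map X ≠ (poissonMeasure r).map (fun n => n + c)) :
    ∀ r : ℝ≥0, P.map (fun ω => X ω + Y ω) ≠ poissonMeasure r :=
  raikov_consequence_general hX.aemeasurable hY.aemeasurable hindep fun s ↦ by
    simpa using hnotPoisson s 0
end
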